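/- (Goto–Nakamura) Let (A, 𝔪) be a d-dimensional complete equidimensional reduced Noetherian local ring of prime characteristic p and let J ⊆ A be an 𝔪-primary ideal generated by d elements (a full system of parameters). Then ℓ_A(A/J^*) ≤ e(J). Moreover, if ℓ_A(A/J^*) = e(J) for some such 𝔪-primary parameter ideal J, then A is F-rational, i.e., every parameter ideal of A is tightly closed. -/

import Mathlib

open IsLocalRing Filter Topology
open scoped TensorProduct

/-- The Frobenius bracket power `I^{[q]}`: the ideal generated by `q`-th powers of elements of `I`. -/
def Ideal.bracketPow {R : Type*} [CommRing R] (I : Ideal R) (q : ℕ) : Ideal R :=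
  Ideal.span ((fun a => a ^ q) '' (I : Set R))

/-- `R°`: the set of elements of `R` not contained in any minimal prime ideal. -/
def ringCirc (R : Type*) [CommRing R] : Set R :=
  {c | ∀ P ∈ minimalPrimes R, c ∉ P}

/-- The tight closure of an ideal `I` in a ring of characteristic `p`:
`x ∈ I^*` iff there is `c ∈ R°` with `c * x ^ (p ^ e) ∈ I^{[p^e]}` for all sufficiently
large `e`. -/
def tightClosure {R : Type*} [CommRing R] (p : ℕ) (I : Ideal R) : Set R :=
  {x | ∃ c ∈ ringCirc R, ∃ N : ℕ, ∀ e : ℕ, N ≤ e → c * x ^ p ^ e ∈ I.bracketPow (p ^ e)}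

/-- `x` is integral over the ideal `J`: there are `n ≥ 1` and `aᵢ ∈ Jⁱ` with
`x ^ n + a₁ x ^ (n-1) + ⋯ + aₙ = 0`. -/
def IsIntegralOverIdeal {R : Type*} [CommRing R] (J : Ideal R) (x : R) : Prop :=
  ∃ n : ℕ, 0 < n ∧ ∃ a : ℕ → R, (∀ i ∈ Finset.Icc 1 n, a i ∈ J ^ i) ∧
    x ^ n + ∑ i ∈ Finset.Icc 1 n, a i * x ^ (n - i) = 0

/-- `R` is F-finite: `F_*R` is a finitely generated `R`-module, i.e. there is a finite set
of generators `s` such that every element of `R` is an `R`-linear combination of elements of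
`s` with respect to the Frobenius-twisted action `r • b = r ^ p * b`. -/
def FFinite (R : Type*) [CommRing R] (p : ℕ) : Prop :=
  ∃ s : Finset R, ∀ x : R, ∃ a : R → R, x = ∑ b ∈ s, a b ^ p * b

/-- The map `cF^e : R → F^e_* R`, `x ↦ c * x ^ (p ^ e)`, splits as an `R`-module
homomorphism: there is an additive `φ : R → R` with `φ (r ^ (p ^ e) * x) = r * φ x`
for all `r, x` and `φ c = 1`. -/
def FrobSplitsWith {R : Type*} [CommRing R] (p : ℕ) (c : R) (e : ℕ) : Prop :=
  ∃ φ : R →+ R, (∀ r x : R, φ (r ^ p ^ e * x) = r * φ x) ∧ φ c = 1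

/-- `R` is strongly F-regular: F-finite, reduced, and for every `c ∈ R°` some `cF^e` splits. -/
def StronglyFRegular (R : Type*) [CommRing R] (p : ℕ) : Prop :=
  FFinite R p ∧ IsReduced R ∧ ∀ c ∈ ringCirc R, ∃ e : ℕ, FrobSplitsWith p c e

/-- `R` is F-pure: the Frobenius map `R → F_* R` splits as an `R`-module homomorphism. -/
def FPure (R : Type*) [CommRing R] (p : ℕ) : Prop :=
  ∃ φ : R →+ R, (∀ r x : R, φ (r ^ p * x) = r * φ x) ∧ φ 1 = 1

/-- A regular local ring: a Noetherian local ring whose maximal ideal can be generated by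
`dim R` elements. -/
def IsRegularLocal (R : Type*) [CommRing R] [IsLocalRing R] : Prop :=
  IsNoetherianRing R ∧ ∃ (d : ℕ) (x : Fin d → R),
    ringKrullDim R = d ∧ IsLocalRing.maximalIdeal R = Ideal.span (Set.range x)

/-- The height of an ideal: the infimum of the heights of the primes containing it. -/
noncomputable def idealHeight {R : Type*} [CommRing R] (I : Ideal R) : ℕ∞ :=
  ⨅ (P : PrimeSpectrum R) (_ : I ≤ P.asIdeal), Order.height P

/-- A parameter ideal: an ideal generated by `ht I` elements. -/
def IsParameterIdeal {R : Type*} [CommRing R] (I : Ideal R) : Prop :=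
  ∃ n : ℕ, idealHeight I = n ∧ ∃ x : Fin n → R, I = Ideal.span (Set.range x)

/-- A local ring is F-rational if every parameter ideal is tightly closed. -/
def FRationalLocal (R : Type*) [CommRing R] [IsLocalRing R] (p : ℕ) : Prop :=
  ∀ I : Ideal R, IsParameterIdeal I → tightClosure p I = ↑I

/-- A Cohen–Macaulay local ring: every full system of parameters `x₁, …, x_d`
(`d = dim B`) is a regular sequence, i.e. `(x₁, …, xᵢ) : xᵢ₊₁ = (x₁, …, xᵢ)`. -/
def IsCohenMacaulayLocalRing (B : Type*) [CommRing B] [IsLocalRing B] : Prop :=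
  ∀ d : ℕ, ringKrullDim B = d →
    ∀ x : Fin d → B, (∀ i, x i ∈ IsLocalRing.maximalIdeal B) →
      (Ideal.span (Set.range x)).radical = IsLocalRing.maximalIdeal B →
      ∀ i : Fin d,
        Submodule.colon (Ideal.span (x '' {j | (j : ℕ) < (i : ℕ)})) (Ideal.span {x i}) =
          Ideal.span (x '' {j | (j : ℕ) < (i : ℕ)})

/-- The length `ℓ_R M` of a module, as an extended natural number: the supremum of the
lengths of chains of submodules below `⊤`. -/
noncomputable def moduleLength (R M : Type*) [Ring R] [AddCommGroup M] [Module R M] : ℕ∞ :=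
  Order.height (⊤ : Submodule R M)

/-- The Frobenius endomorphism `x ↦ x ^ p`, as a ring homomorphism, in prime
characteristic `p`. -/
noncomputable def frobeniusRingHom (R : Type*) [CommRing R] (p : ℕ) [Fact p.Prime] [CharP R p] :
    R →+* R :=
  frobenius R p

open Polynomial in
lemma gn_step {L K T : Type*} [Field L] [Field K] [CommRing T] (p : ℕ) [hp : Fact p.Prime]
    [CharP K p] (i : L →+* K) (j : L →+* T) (α : K) (r : T) (a : L) (hα : α ^ p = i a)
    (hr : r ^ p = j a) (hnot : ∀ b : L, i b ≠ α) (P : L[X]) (hP : P.eval₂ i α = 0) :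
    P.eval₂ j r = 0 := by
  have hirr : Irreducible (X ^ p - C a : L[X]) := by
    apply X_pow_sub_C_irreducible_of_prime hp.out
    intro b hb
    apply hnot b
    apply frobenius_inj K p
    simp only [frobenius_def]
    rw [← map_pow, hb, hα]
  letI := i.toAlgebra
  have h1 : Polynomial.aeval α (X ^ p - C a : L[X]) = 0 := by
    simp [hα, RingHom.algebraMap_toAlgebra]
  have hmin := minpoly.eq_of_irreducible_of_monic hirr h1
    (monic_X_pow_sub_C a hp.out.ne_zero)
  have : (X ^ p - C a : L[X]) ∣ P := by
    rw [hmin]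
    exact minpoly.dvd L α hP
  obtain ⟨Q, rfl⟩ := this
  simp [eval₂_mul, hr]

open Polynomial in
lemma gn_lift {K R : Type*} [Field K] [CommRing R] (p : ℕ) [hp : Fact p.Prime]
    [CharP K p] [CharP R p] (I : Ideal R) (hI : I ^ 2 = ⊥) (f : K →+* R ⧸ I) :
    ∃ g : K →+* R, (Ideal.Quotient.mk I).comp g = f := by
  let E : Set (K × R) := {z | f z.1 = Ideal.Quotient.mk I z.2}
  let s : Set (Subring (K × R)) := {S | (∀ z ∈ S, f z.1 = Ideal.Quotient.mk I z.2) ∧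
    (∀ z ∈ S, z.1 = 0 → z.2 = 0) ∧ ∀ z : K × R, f z.1 = Ideal.Quotient.mk I z.2 → z ^ p ∈ S}
  have hI' : ∀ r ∈ I, r ^ p = 0 := by
    intro r hr
    have : r ^ p ∈ I ^ 2 := Ideal.pow_le_pow_right hp.out.two_le (Ideal.pow_mem_pow hr p)
    rw [hI] at this
    simpa using this
  have : CharP (K × R) p := ⟨fun x => by
    rw [Prod.ext_iff]
    simp [CharP.cast_eq_zero_iff K p, CharP.cast_eq_zero_iff R p]⟩
  let E' : Subring (K × R) :=
    { carrier := E
      mul_mem' := by intro a b ha hb; simp only [E, Set.mem_setOf_eq] at *; simp [ha, hb]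
      add_mem' := by intro a b ha hb; simp only [E, Set.mem_setOf_eq] at *; simp [ha, hb]
      one_mem' := by simp [E]
      zero_mem' := by simp [E]
      neg_mem' := by intro a ha; simp only [E, Set.mem_setOf_eq] at *; simp [ha] }
  have h0 : E'.map (frobenius (K × R) p) ∈ s := by
    refine ⟨?_, ?_, ?_⟩
    · rintro _ ⟨z, hz, rfl⟩
      have hz : f z.1 = Ideal.Quotient.mk I z.2 := hz
      simp [frobenius_def, hz]
    · rintro _ ⟨z, hz, rfl⟩ h
      have hz : f z.1 = Ideal.Quotient.mk I z.2 := hz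
      have h1 : z.1 = 0 := by
        simpa [frobenius_def, hp.out.ne_zero] using h
      rw [h1, map_zero] at hz
      exact hI' _ (Ideal.Quotient.eq_zero_iff_mem.mp hz.symm)
    · intro z hz
      exact ⟨z, hz, rfl⟩
  obtain ⟨S, -, hS⟩ := zorn_le_nonempty₀ s (by
    intro c hc hch y hy
    refine ⟨sSup c, ⟨?_, ?_, ?_⟩, fun z hz => le_sSup hz⟩
    · intro z hz
      obtain ⟨T, hT, hz⟩ := (Subring.mem_sSup_of_directedOn ⟨y, hy⟩ hch.directedOn).1 hz
      exact (hc hT).1 z hz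
    · intro z hz
      obtain ⟨T, hT, hz⟩ := (Subring.mem_sSup_of_directedOn ⟨y, hy⟩ hch.directedOn).1 hz
      exact (hc hT).2.1 z hz
    · intro z hz
      exact (le_sSup hy) ((hc hy).2.2 z hz)) _ h0
  obtain ⟨⟨hS1, hS2, hS3⟩, hmax⟩ := hS
  have hfield : IsField S := by
    refine ⟨⟨0, 1, fun h => ?_⟩, mul_comm, ?_⟩
    · have := congrArg (fun z : S => (z : K × R).1) h
      simp at this
    · intro a ha
      have ha1 : (a : K × R).1 ≠ 0 := by
        intro h
        apply ha
        ext
        · exact h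
        · exact hS2 _ a.2 h
      obtain ⟨r, hr⟩ := Ideal.Quotient.mk_surjective (f (a : K × R).1⁻¹)
      have hb := hS3 ((a : K × R).1⁻¹, r) hr.symm
      let b : S := a ^ (p - 1) * ⟨_, hb⟩
      refine ⟨b, ?_⟩
      have key : ((a * b - 1 : S) : K × R).1 = 0 := by
        have : (a : K × R).1 * (a : K × R).1 ^ (p - 1) = (a : K × R).1 ^ p :=
          mul_pow_sub_one hp.out.ne_zero _
        change (a : K × R).1 * ((a : K × R).1 ^ (p - 1) * (a : K × R).1⁻¹ ^ p) - 1 = 0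
        rw [← mul_assoc, this, inv_pow, mul_inv_cancel₀ (pow_ne_zero _ ha1), sub_self]
      have : a * b - 1 = 0 := by
        ext
        · exact key
        · exact hS2 _ (a * b - 1).2 key
      exact sub_eq_zero.mp this
  have hsurj : ∀ α : K, ∃ z ∈ S, z.1 = α := by
    by_contra hcon
    push Not at hcon
    obtain ⟨α, hα⟩ := hcon
    obtain ⟨r, hr⟩ := Ideal.Quotient.mk_surjective (f α)
    have ha := hS3 (α, r) hr.symm
    let S' : Subring (K × R) := (Polynomial.eval₂RingHom S.subtype (α, r)).range
    have hSS' : S ≤ S' := by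
      intro z hz
      refine ⟨C ⟨z, hz⟩, by simp⟩
    have hmem : S' ∈ s := by
      refine ⟨?_, ?_, fun z hz => hSS' (hS3 z hz)⟩
      · have hle : S' ≤ E' := by
          rintro _ ⟨P, rfl⟩
          simp only [coe_eval₂RingHom]
          rw [eval₂_eq_sum_range]
          refine Subring.sum_mem _ fun i _ => Subring.mul_mem _ ?_ (Subring.pow_mem _ ?_ _)
          · exact hS1 _ (P.coeff i).2
          · exact hr.symm
        exact fun z hz => hle hz
      · rintro _ ⟨P, rfl⟩ h
        letI := hfield.toField
        have h1 := gn_step (L := S) p ((RingHom.fst K R).comp S.subtype)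
          ((RingHom.snd K R).comp S.subtype) α r ⟨_, ha⟩ (by simp) (by simp)
          (fun b hb => hα _ b.2 hb) P
        have e1 := Polynomial.hom_eval₂ P S.subtype (RingHom.fst K R) (α, r)
        have e2 := Polynomial.hom_eval₂ P S.subtype (RingHom.snd K R) (α, r)
        simp only [RingHom.coe_fst, RingHom.coe_snd] at e1 e2
        simp only [coe_eval₂RingHom] at h ⊢
        rw [e2]
        rw [e1] at h
        exact h1 h
    have := hmax hmem hSS'
    have h2 : (α, r) ∈ S := this ⟨X, by simp⟩
    exact hα _ h2 rfl
  have hbij : Function.Bijective ((RingHom.fst K R).comp S.subtype) := by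
    constructor
    · rw [injective_iff_map_eq_zero]
      intro a ha
      ext
      · exact ha
      · exact hS2 _ a.2 ha
    · intro α
      obtain ⟨z, hz, rfl⟩ := hsurj α
      exact ⟨⟨z, hz⟩, rfl⟩
  let e := RingEquiv.ofBijective _ hbij
  refine ⟨((RingHom.snd K R).comp S.subtype).comp (e.symm : K →+* S), ?_⟩
  ext x
  obtain ⟨z, rfl⟩ := e.surjective x
  simp only [RingHom.comp_apply, RingHom.coe_coe, RingEquiv.symm_apply_apply]
  exact (hS1 _ z.2).symm

lemma gn_formallySmooth (K : Type*) [Field K] (p : ℕ) [hp : Fact p.Prime] [CharP K p]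
    [Algebra (ZMod p) K] : Algebra.FormallySmooth (ZMod p) K := by
  apply Algebra.FormallySmooth.of_comp_surjective
  intro B _ _ I hI f
  rcases subsingleton_or_nontrivial B with hB | hB
  · refine ⟨AlgHom.mk (⟨⟨⟨fun _ => 0, ?_⟩, ?_⟩, ?_, ?_⟩ : K →+* B) ?_, ?_⟩
    any_goals intros; exact Subsingleton.elim _ _
  · haveI : CharP B p := charP_of_injective_algebraMap (algebraMap (ZMod p) B).injective p
    obtain ⟨g, hg⟩ := gn_lift p I hI f.toRingHom
    refine ⟨AlgHom.mk g fun r => ?_, ?_⟩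
    · exact congrArg (fun h : ZMod p →+* B => h r) (Subsingleton.elim
        (g.comp (algebraMap (ZMod p) K)) (algebraMap (ZMod p) B))
    · ext x
      exact congrArg (fun h : K →+* B ⧸ I => h x) hg

/-- existence of a coefficient field -/
lemma gn_coeffField (A : Type*) [CommRing A] [IsLocalRing A] (p : ℕ) [Fact p.Prime] [CharP A p]
    (hcomp : IsAdicComplete (IsLocalRing.maximalIdeal A) A) :
    ∃ g : IsLocalRing.ResidueField A →+* A,
      (IsLocalRing.residue A).comp g = RingHom.id _ := by
  letI : Algebra (ZMod p) A := ZMod.algebra A p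
  letI : Algebra (ZMod p) (IsLocalRing.ResidueField A) := 
    ((IsLocalRing.residue A).comp (algebraMap (ZMod p) A)).toAlgebra
  haveI : CharP (IsLocalRing.ResidueField A) p :=
    charP_of_injective_algebraMap (algebraMap (ZMod p) (IsLocalRing.ResidueField A)).injective p
  haveI := gn_formallySmooth (IsLocalRing.ResidueField A) p
  let f : IsLocalRing.ResidueField A →ₐ[ZMod p] A ⧸ IsLocalRing.maximalIdeal A :=
    AlgHom.mk (RingHom.id _) (fun r => rfl)
  obtain ⟨g, hg⟩ := Algebra.FormallySmooth.exists_mkₐ_comp_eq_of_isAdicComplete f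
  exact ⟨g.toRingHom, RingHom.ext fun x => congrArg (fun h => h x) hg⟩


namespace GN
open MvPowerSeries

/-- constant exponent -/
noncomputable def cst (d N : ℕ) : Fin d →₀ ℕ := Finsupp.equivFunOnFinite.symm (fun _ => N)

@[simp] lemma cst_apply (d N : ℕ) (i : Fin d) : cst d N i = N := rfl

lemma le_cst {d N : ℕ} {α : Fin d →₀ ℕ} : α ≤ cst d N ↔ ∀ i, α i < N + 1 := by
  rw [Finsupp.le_def]
  exact forall_congr' fun i => by rw [cst_apply]; omega

variable {k : Type*} [Field k] {d : ℕ}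

lemma prod_X_pow (N : ℕ) :
    (∏ i : Fin d, (X i : MvPowerSeries (Fin d) k) ^ N) = monomial (cst d N) 1 := by
  have : ∀ s : Finset (Fin d), (∏ i ∈ s, (X i : MvPowerSeries (Fin d) k) ^ N) =
      monomial (∑ i ∈ s, Finsupp.single i N) 1 := by
    intro s
    induction s using Finset.induction_on with
    | empty => simp
    | insert a s ha ih =>
      rw [Finset.prod_insert ha, Finset.sum_insert ha, ih, X_pow_eq, monomial_mul_monomial, one_mul]
  rw [this]
  congr 2
  ext i
  simp [Finsupp.finsetSum_apply, Finsupp.single_apply]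

/-- membership in monomial ideals -/
lemma mem_span_pow (T : Finset (Fin d)) (a : Fin d → ℕ) (f : MvPowerSeries (Fin d) k) :
    f ∈ Ideal.span ((fun i => (X i : MvPowerSeries (Fin d) k) ^ a i) '' (T : Set (Fin d))) ↔
      ∀ α : Fin d →₀ ℕ, (∀ i ∈ T, α i < a i) → coeff α f = 0 := by
  classical
  constructor
  · intro hf
    refine Submodule.span_induction (p := fun f _ => ∀ α : Fin d →₀ ℕ, (∀ i ∈ T, α i < a i) →
      coeff α f = 0) ?_ ?_ ?_ ?_ hf
    · rintro _ ⟨i, hi, rfl⟩ α hα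
      exact X_pow_dvd_iff.mp dvd_rfl α (hα i hi)
    · simp
    · intro x y _ _ hx hy α hα
      rw [map_add, hx α hα, hy α hα, add_zero]
    · intro r x _ hx α hα
      rw [smul_eq_mul, coeff_mul]
      refine Finset.sum_eq_zero fun z hz => ?_
      rw [Finset.HasAntidiagonal.mem_antidiagonal] at hz
      rw [hx z.2 (fun i hi => ?_), mul_zero]
      have := hα i hi
      rw [← hz, Finsupp.add_apply] at this
      omega
  · induction T using Finset.induction_on generalizing f with
    | empty =>
      intro h
      have : f = 0 := by
        ext α
        simpa using h α (by simp)
      rw [this]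
      exact Submodule.zero_mem _
    | insert i T hi ih =>
      intro h
      let g : MvPowerSeries (Fin d) k := fun α => if a i ≤ α i then 0 else coeff α f
      have hg : ∀ α, coeff α g = if a i ≤ α i then 0 else coeff α f := fun α => rfl
      have h1 : g ∈ Ideal.span ((fun i => (X i : MvPowerSeries (Fin d) k) ^ a i) ''
          (T : Set (Fin d))) := by
        apply ih
        intro α hα
        rw [hg]
        split_ifs with h2
        · rfl
        · refine h α fun j hj => ?_
          rcases Finset.mem_insert.mp hj with rfl | hj
          · omega
          · exact hα j hj
      have h2 : (X i : MvPowerSeries (Fin d) k) ^ a i ∣ f - g := by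
        rw [X_pow_dvd_iff]
        intro α hα
        rw [map_sub, hg, if_neg (by omega), sub_self]
      have h3 : f = (f - g) + g := by ring
      rw [h3]
      refine Ideal.add_mem _ ?_ ?_
      · obtain ⟨c, hc⟩ := h2
        rw [hc]
        exact Ideal.mul_mem_right _ _ (Ideal.subset_span ⟨i, by simp, rfl⟩)
      · exact Ideal.span_mono (Set.image_mono (by simp)) h1

lemma mem_span_pow' (a : Fin d → ℕ) (f : MvPowerSeries (Fin d) k) :
    f ∈ Ideal.span (Set.range fun i => (X i : MvPowerSeries (Fin d) k) ^ a i) ↔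
      ∀ α : Fin d →₀ ℕ, (∀ i, α i < a i) → coeff α f = 0 := by
  have := mem_span_pow Finset.univ a f
  simpa using this

/-- colon of monomial ideals -/
lemma ps_colon (m l : ℕ) (g : MvPowerSeries (Fin d) k)
    (h : (∏ i : Fin d, (X i : MvPowerSeries (Fin d) k) ^ m) * g ∈
      Ideal.span (Set.range fun i => (X i : MvPowerSeries (Fin d) k) ^ (m + l))) :
    g ∈ Ideal.span (Set.range fun i => (X i : MvPowerSeries (Fin d) k) ^ l) := by
  rw [mem_span_pow' (fun _ => _)] at h ⊢
  intro α hα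
  have := h (cst d m + α) (fun i => by have := hα i; simp; omega)
  rwa [prod_X_pow, coeff_add_monomial_mul, one_mul] at this

lemma ps_reg (a : Fin d → ℕ) (i : Fin d) (g : MvPowerSeries (Fin d) k)
    (h : X i * g ∈ Ideal.span ((fun j => (X j : MvPowerSeries (Fin d) k) ^ a j) '' {j | j ≠ i})) :
    g ∈ Ideal.span ((fun j => (X j : MvPowerSeries (Fin d) k) ^ a j) '' {j | j ≠ i}) := by
  classical
  have e : {j | j ≠ i} = ((Finset.univ.erase i : Finset (Fin d)) : Set (Fin d)) := by
    ext; simp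
  rw [e, mem_span_pow] at h ⊢
  intro α hα
  have := h (Finsupp.single i 1 + α) (fun j hj => by
    have h1 := hα j hj
    have : j ≠ i := Finset.ne_of_mem_erase hj
    simp [Finsupp.single_apply, this.symm]; exact h1)
  rwa [X, coeff_add_monomial_mul, one_mul] at this

/-- socle argument -/
lemma ps_socle {ι : Type*} (N : ℕ) (g : ι → MvPowerSeries (Fin d) k)
    (h : ∃ j, g j ∉ Ideal.span (Set.range fun i => (X i : MvPowerSeries (Fin d) k) ^ (N + 1))) :
    ∃ μ : MvPowerSeries (Fin d) k, ∃ c : ι → k, (∃ j, c j ≠ 0) ∧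
      ∀ j, μ * g j - C (c j) * (∏ i : Fin d, (X i : MvPowerSeries (Fin d) k) ^ N) ∈
        Ideal.span (Set.range fun i => (X i : MvPowerSeries (Fin d) k) ^ (N + 1)) := by
  classical
  have hex : ∃ n : ℕ, ∃ α : Fin d →₀ ℕ, α.degree = n ∧ α ≤ cst d N ∧ ∃ j, coeff α (g j) ≠ 0 := by
    obtain ⟨j, hj⟩ := h
    rw [mem_span_pow' (fun _ => _)] at hj
    push Not at hj
    obtain ⟨α, hα, h2⟩ := hj
    exact ⟨_, α, rfl, le_cst.mpr hα, j, h2⟩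
  obtain ⟨α, hα, hle, hj⟩ := Nat.find_spec hex
  have hmin : ∀ β : Fin d →₀ ℕ, β.degree < α.degree → β ≤ cst d N → ∀ j, coeff β (g j) = 0 := by
    intro β hβ hβ' j
    by_contra hne
    rw [hα] at hβ
    exact Nat.find_min hex hβ ⟨β, rfl, hβ', j, hne⟩
  refine ⟨monomial (cst d N - α) 1, fun j => coeff α (g j), hj, fun j => ?_⟩
  rw [mem_span_pow' (fun _ => _)]
  intro γ hγ
  have hγ : γ ≤ cst d N := le_cst.mpr hγ
  rw [map_sub, coeff_monomial_mul, coeff_C_mul, prod_X_pow, coeff_monomial, one_mul]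
  by_cases h1 : γ = cst d N
  · rw [if_pos h1, if_pos (by rw [h1]; exact tsub_le_self), h1, tsub_tsub_cancel_of_le hle, mul_one,
      sub_self]
  · rw [if_neg h1, mul_zero, sub_zero]
    split_ifs with h2
    · apply hmin
      · have h3 : γ - (cst d N - α) < α := by
          refine lt_of_le_of_ne ?_ ?_
          · rw [tsub_le_iff_right, add_tsub_cancel_of_le hle]; exact hγ
          · intro h4
            apply h1
            rw [← tsub_add_cancel_of_le h2, h4, add_tsub_cancel_of_le hle]
        obtain ⟨δ, hδ⟩ := exists_add_of_le h3.le
        have hδ0 : δ ≠ 0 := by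
          rintro rfl
          rw [add_zero] at hδ
          exact h3.ne hδ.symm
        rw [hδ, map_add]
        have : δ.degree ≠ 0 := by rwa [Ne, Finsupp.degree_eq_zero_iff]
        rw [← hδ]
        omega
      · exact tsub_le_self.trans hγ
    · rfl

/-- annihilator duality -/
lemma ps_dual (N : ℕ) (b g : MvPowerSeries (Fin d) k)
    (h : g ∉ Ideal.span {b} ⊔
      Ideal.span (Set.range fun i => (X i : MvPowerSeries (Fin d) k) ^ (N + 1))) :
    ∃ y : MvPowerSeries (Fin d) k,
      y * b ∈ Ideal.span (Set.range fun i => (X i : MvPowerSeries (Fin d) k) ^ (N + 1)) ∧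
      y * g ∉ Ideal.span (Set.range fun i => (X i : MvPowerSeries (Fin d) k) ^ (N + 1)) := by
  classical
  set I := Ideal.span {b} ⊔
      Ideal.span (Set.range fun i => (X i : MvPowerSeries (Fin d) k) ^ (N + 1)) with hI
  obtain ⟨f, hf2, hf1⟩ := Submodule.exists_le_ker_of_notMem
    (p := I.restrictScalars k) (v := g) h
  let y : MvPowerSeries (Fin d) k :=
    ∑ α ∈ Finset.Iic (cst d N), monomial (cst d N - α) (f (monomial α 1))
  have key : ∀ h : MvPowerSeries (Fin d) k, coeff (cst d N) (y * h) = f h := by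
    intro h
    have h1 : coeff (cst d N) (y * h) =
        f (∑ α ∈ Finset.Iic (cst d N), coeff α h • monomial α (1 : k)) := by
      simp only [y, Finset.sum_mul, map_sum, map_smul, smul_eq_mul]
      refine Finset.sum_congr rfl fun α hα => ?_
      rw [Finset.mem_Iic] at hα
      rw [coeff_monomial_mul, if_pos tsub_le_self, tsub_tsub_cancel_of_le hα, mul_comm]
    have h2 : h - (∑ α ∈ Finset.Iic (cst d N), coeff α h • monomial α (1 : k)) ∈ I := by
      apply le_sup_right (a := Ideal.span {b})
      rw [mem_span_pow' (fun _ => _)]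
      intro γ hγ
      have hγ : γ ≤ cst d N := le_cst.mpr hγ
      simp [map_sub, map_sum, coeff_monomial, hγ]
    have h3 := hf1 h2
    rw [LinearMap.mem_ker, map_sub, sub_eq_zero] at h3
    rw [h1, h3]
  refine ⟨y, ?_, ?_⟩
  · rw [mem_span_pow' (fun _ => _)]
    intro α hα
    have hα : α ≤ cst d N := le_cst.mpr hα
    have h1 := key (b * monomial (cst d N - α) 1)
    have h2 : f (b * monomial (cst d N - α) 1) = 0 := by
      apply hf1
      exact le_sup_left (a := Ideal.span {b})
        (Ideal.mul_mem_right _ _ (Ideal.mem_span_singleton_self b))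
    rw [h2, ← mul_assoc] at h1
    have h3 := coeff_add_mul_monomial α (cst d N - α) (y * b) (1 : k)
    rw [add_tsub_cancel_of_le hα, h1, mul_one] at h3
    exact h3.symm
  · intro h1
    rw [mem_span_pow' (fun _ => _)] at h1
    have := h1 (cst d N) (fun i => by simp)
    rw [key] at this
    exact hf2 this

lemma ps_pow (m : ℕ) (f : MvPowerSeries (Fin d) k)
    (hf : f ∈ Ideal.span (Set.range (X : Fin d → MvPowerSeries (Fin d) k)) ^ m)
    (α : Fin d →₀ ℕ) (hα : α.degree < m) : coeff α f = 0 := by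
  have : ∀ m : ℕ, ∀ f ∈ Ideal.span (Set.range (X : Fin d → MvPowerSeries (Fin d) k)) ^ m,
      (m : ℕ∞) ≤ f.order := by
    intro m
    induction m with
    | zero => simp
    | succ m ih =>
      intro f hf
      rw [pow_succ] at hf
      refine Submodule.mul_induction_on hf ?_ ?_
      · intro a ha b hb
        refine le_trans ?_ le_order_mul
        push_cast
        refine add_le_add (ih a ha) ?_
        rw [one_le_order_iff_constCoeff_eq_zero]
        have hle : Ideal.span (Set.range (X : Fin d → MvPowerSeries (Fin d) k)) ≤
            RingHom.ker (constantCoeff (σ := Fin d) (R := k)) := by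
          rw [Ideal.span_le]
          rintro _ ⟨i, rfl⟩
          simp
        exact hle hb
      · intro a b ha hb
        exact le_trans (le_min ha hb) (min_order_le_add)
  exact coeff_of_lt_order (lt_of_lt_of_le (by exact_mod_cast hα) (this m f hf))

lemma card_low_deg (d M : ℕ) : ∃ S : Finset (Fin d →₀ ℕ), (∀ α ∈ S, α.degree < M + 1) ∧
    (M + 1) ^ d ≤ d.factorial * S.card := by
  classical
  refine ⟨(Finset.finsuppAntidiag (Finset.univ : Finset (Fin (d + 1))) M).image Finsupp.tail,
    ?_, ?_⟩
  · intro α hα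
    obtain ⟨β, hβ, rfl⟩ := Finset.mem_image.mp hα
    rw [Finset.mem_finsuppAntidiag] at hβ
    have := hβ.1
    rw [Fin.sum_univ_succ] at this
    rw [Finsupp.degree_eq_sum]
    simp only [Finsupp.tail_apply]
    omega
  · rw [Finset.card_image_of_injOn]
    · rw [Finset.card_finsuppAntidiag_nat_eq_choose]
      simp only [Finset.card_univ, Fintype.card_fin]
      have h1 := Nat.pow_succ_le_ascFactorial (M + 1) d
      rw [Nat.ascFactorial_eq_factorial_mul_choose] at h1
      have h2 : d + 1 + M - 1 = M + d := by omega
      rw [h2, Nat.choose_symm_add]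
      exact h1
    · intro β hβ γ hγ h
      rw [Finset.mem_coe, Finset.mem_finsuppAntidiag, Fin.sum_univ_succ] at hβ hγ
      have h' : ∀ i, β (Fin.succ i) = γ (Fin.succ i) := fun i => by
        have := DFunLike.congr_fun h i
        simpa only [Finsupp.tail_apply] using this
      ext i
      refine Fin.cases ?_ (fun i => h' i) i
      have := Finset.sum_congr (rfl : (Finset.univ : Finset (Fin d)) = Finset.univ)
        (fun i _ => h' i)
      omega

end GN


namespace GN
open IsLocalRing

section length
variable {k A : Type*} [Field k] [CommRing A] [IsLocalRing A] [Algebra k A]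

lemma simple_k (hres : ∀ a : A, ∃ c : k, a - algebraMap k A c ∈ maximalIdeal A)
    (S : Type*) [AddCommGroup S] [Module A S] [Module k S] [IsScalarTower k A S]
    [hS : IsSimpleModule A S] : IsSimpleModule k S := by
  have := IsSimpleModule.nontrivial A S
  rw [isSimpleModule_iff_toSpanSingleton_surjective]
  refine ⟨inferInstance, fun s hs t => ?_⟩
  have hsurj := (isSimpleModule_iff_toSpanSingleton_surjective.mp hS).2
  obtain ⟨a, ha⟩ := hsurj s hs t
  obtain ⟨c, hc⟩ := hres a
  refine ⟨c, ?_⟩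
  have h0 : (a - algebraMap k A c) • s = 0 := by
    by_contra hne
    obtain ⟨b, hb⟩ := hsurj _ hne s
    rw [LinearMap.toSpanSingleton_apply, smul_smul] at hb
    have hm : b * (a - algebraMap k A c) ∈ maximalIdeal A := Ideal.mul_mem_left _ _ hc
    have hu : IsUnit (1 - b * (a - algebraMap k A c)) := by
      by_contra hn
      have := (mem_maximalIdeal _).mpr hn
      exact (Ideal.ne_top_iff_one _).mp (maximalIdeal.isMaximal A).ne_top
        (by simpa using Ideal.add_mem _ this hm)
    have : (1 - b * (a - algebraMap k A c)) • s = 0 := by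
      rw [sub_smul, hb, one_smul, sub_self]
    exact hs (by simpa using (IsUnit.smul_eq_zero hu).mp this)
  rw [LinearMap.toSpanSingleton_apply] at ha ⊢
  rw [sub_smul, ha, algebraMap_smul, sub_eq_zero] at h0
  exact h0.symm

lemma length_k (hres : ∀ a : A, ∃ c : k, a - algebraMap k A c ∈ maximalIdeal A)
    (M : Type*) [AddCommGroup M] [Module A M] (hM : IsFiniteLength A M) :
    ∀ [Module k M] [IsScalarTower k A M], Module.length k M = Module.length A M := by
  induction hM with
  | of_subsingleton => intro _ _; simp
  | @of_simple_quotient M _ _ N _ hN ih =>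
    intro _ _
    have h1 := Module.length_eq_add_of_exact N.subtype N.mkQ N.subtype_injective N.mkQ_surjective
      (LinearMap.exact_subtype_mkQ N)
    have h2 := Module.length_eq_add_of_exact (N.subtype.restrictScalars k)
      (N.mkQ.restrictScalars k) N.subtype_injective N.mkQ_surjective
      (LinearMap.exact_subtype_mkQ N)
    have : IsSimpleModule k (M ⧸ N) := simple_k hres _
    rw [h1, h2, ih]
    rw [Module.length_eq_one A (M ⧸ N), Module.length_eq_one k (M ⧸ N)]

variable [IsNoetherianRing A]

lemma finLen {I : Ideal A} (hI : I.radical = maximalIdeal A) : IsFiniteLength A (A ⧸ I) := by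
  rw [isFiniteLength_iff_isNoetherian_isArtinian]
  refine ⟨inferInstance, ?_⟩
  have : IsArtinianRing (A ⧸ I) := by
    apply IsLocalRing.quotient_artinian_of_mem_minimalPrimes_of_isLocalRing
    rw [← Ideal.radical_minimalPrimes, hI, Ideal.minimalPrimes_eq_subsingleton_self]
    rfl
  exact isArtinian_of_surjective_algebraMap (R := A ⧸ I) Ideal.Quotient.mk_surjective

lemma finite_of_finLen (hres : ∀ a : A, ∃ c : k, a - algebraMap k A c ∈ maximalIdeal A)
    (M : Type*) [AddCommGroup M] [Module A M] (hM : IsFiniteLength A M)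
    [Module k M] [IsScalarTower k A M] : Module.Finite k M ∧
      Module.length A M = Module.finrank k M := by
  have h := length_k hres M hM
  have h2 : Module.length k M ≠ ⊤ := by rw [h]; exact Module.length_ne_top_iff.mpr hM
  have h3 := (isFiniteLength_iff_isNoetherian_isArtinian.mp (Module.length_ne_top_iff.mp h2)).1
  have : Module.Finite k M := inferInstance
  refine ⟨this, ?_⟩
  rw [← h, Module.length_eq_finrank]

end length
end GN


namespace GN
open IsLocalRing

lemma evalHom {k A : Type*} [Field k] [CommRing A] [IsLocalRing A]
    (hcomp : IsAdicComplete (maximalIdeal A) A) (σ : k →+* A) {d : ℕ} (x : Fin d → A)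
    (hx : ∀ i, x i ∈ maximalIdeal A) :
    ∃ φ : MvPowerSeries (Fin d) k →+* A, (∀ c, φ (MvPowerSeries.C c) = σ c) ∧
      ∀ i, φ (MvPowerSeries.X i) = x i := by
  letI : UniformSpace k := ⊥
  letI : DiscreteTopology k := ⟨rfl⟩
  letI : TopologicalSpace A := (maximalIdeal A).adicTopology
  letI : IsTopologicalRing A := (maximalIdeal A).ringFilterBasis.isTopologicalRing
  letI : UniformSpace A := IsTopologicalAddGroup.rightUniformSpace A
  letI : IsUniformAddGroup A := isUniformAddGroup_of_addCommGroup
  have hadic : IsAdic (maximalIdeal A) := rfl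
  obtain ⟨_, _⟩ := hadic.isAdicComplete_iff.mp hcomp
  haveI : IsLinearTopology A A := IsLinearTopology.mk_of_hasBasis (ι := ℕ) A (p := fun _ => True) (s := fun n => ((maximalIdeal A)^n : Ideal A)) hadic.hasBasis_nhds_zero
  have hev : MvPowerSeries.HasEval x := by
    refine ⟨fun s => ?_, ?_⟩
    · refine hadic.hasBasis_nhds_zero.tendsto_right_iff.mpr fun n _ => ?_
      filter_upwards [Filter.eventually_ge_atTop n] with m hm
      exact Ideal.pow_le_pow_right hm (Ideal.pow_mem_pow (hx s) m)
    · simp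
  have hσ : Continuous σ := continuous_of_discreteTopology
  have : IsUniformAddGroup k := by infer_instance
  refine ⟨MvPowerSeries.eval₂Hom hσ hev, fun c => ?_, fun i => ?_⟩
  · rw [MvPowerSeries.coe_eval₂Hom, MvPowerSeries.eval₂_C]
  · rw [MvPowerSeries.coe_eval₂Hom, MvPowerSeries.eval₂_X]

lemma mem_smul_top_pi {R ι : Type*} [CommRing R] [Finite ι] (I : Ideal R) (x : ι → R) :
    x ∈ (I • ⊤ : Submodule R (ι → R)) ↔ ∀ i, x i ∈ I := by
  classical
  have := Fintype.ofFinite ι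
  constructor
  · intro h i
    induction h using Submodule.smul_induction_on' with
    | smul r hr n _ => exact Ideal.mul_mem_right _ _ hr
    | add x _ y _ h1 h2 => exact Ideal.add_mem _ h1 h2
  · intro h
    rw [pi_eq_sum_univ x]
    exact Submodule.sum_mem _ fun i _ => Submodule.smul_mem_smul (h i) trivial

lemma precomplete_pi {R ι : Type*} [CommRing R] [Finite ι] (I : Ideal R) [h : IsPrecomplete I R] :
    IsPrecomplete I (ι → R) := by
  constructor
  intro f hf
  have h1 : ∀ i, ∃ L : R, ∀ n, f n i ≡ L [SMOD (I ^ n • ⊤ : Submodule R R)] := by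
    intro i
    apply IsPrecomplete.prec h
    intro m n hmn
    have := hf hmn
    rw [SModEq.sub_mem, mem_smul_top_pi] at this
    rw [SModEq.sub_mem]
    simpa using this i
  choose L hL using h1
  refine ⟨L, fun n => ?_⟩
  rw [SModEq.sub_mem, mem_smul_top_pi]
  intro i
  have := hL i n
  rw [SModEq.sub_mem] at this
  simpa using this

section
variable {k A : Type*} [Field k] [CommRing A] [IsLocalRing A] [IsNoetherianRing A] {d : ℕ}
  [Algebra k A] [Algebra (MvPowerSeries (Fin d) k) A]
  [IsScalarTower k (MvPowerSeries (Fin d) k) A]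

noncomputable abbrev xx (k : Type*) (A : Type*) [Field k] [CommRing A] {d : ℕ}
  [Algebra (MvPowerSeries (Fin d) k) A] (i : Fin d) : A :=
  algebraMap (MvPowerSeries (Fin d) k) A (MvPowerSeries.X i)

lemma finite_B (hres : ∀ a : A, ∃ c : k, a - algebraMap k A c ∈ maximalIdeal A)
    (hrad : (Ideal.span (Set.range (xx (d := d) k A))).radical = maximalIdeal A) :
    Module.Finite (MvPowerSeries (Fin d) k) A := by
  set B := MvPowerSeries (Fin d) k
  set J := Ideal.span (Set.range (xx (d := d) k A)) with hJ
  set n : Ideal B := Ideal.span (Set.range MvPowerSeries.X) with hn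
  have hmap : n.map (algebraMap B A) = J := by
    rw [hn, Ideal.map_span, ← Set.range_comp]; rfl
  have hfin : Module.Finite k (A ⧸ J) := (finite_of_finLen hres _ (finLen hrad)).1
  obtain ⟨s, f, hf⟩ := Module.Finite.exists_fin' k (A ⧸ J)
  choose a ha using fun i => Ideal.Quotient.mk_surjective (I := J) (f (Pi.single i 1))
  have : IsPrecomplete n B := inferInstance
  have : IsPrecomplete n (Fin s → B) := precomplete_pi n
  have : IsHausdorff J A := by
    apply IsHausdorff.of_isLocalRing
    intro h
    rw [h, Ideal.radical_top] at hrad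
    exact (maximalIdeal.isMaximal A).ne_top hrad.symm
  have : IsHausdorff n A := by
    rw [← hmap] at this
    exact IsHausdorff.map_algebraMap_iff.mp this
  let F : (Fin s → B) →ₗ[B] A := Fintype.linearCombination B a
  have hF : Function.Surjective F := by
    apply surjective_of_mkQ_comp_surjective (I := n)
    intro y
    obtain ⟨y, rfl⟩ := Submodule.mkQ_surjective _ y
    obtain ⟨c, hc⟩ := hf (Ideal.Quotient.mk J y)
    refine ⟨fun i => MvPowerSeries.C (c i), ?_⟩
    rw [LinearMap.comp_apply, Submodule.mkQ_apply, Submodule.mkQ_apply, Submodule.Quotient.eq,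
      Ideal.smul_top_eq_map, hmap, Submodule.restrictScalars_mem, ← Ideal.Quotient.eq, ← hc]
    have hc2 : f c = ∑ i, c i • f (Pi.single i 1) := by
      conv_lhs => rw [pi_eq_sum_univ' c]
      rw [map_sum]
      refine Finset.sum_congr rfl fun i _ => ?_
      rw [map_smul]
    rw [hc2]
    simp only [F, Fintype.linearCombination_apply, map_sum]
    refine Finset.sum_congr rfl fun i _ => ?_
    rw [← ha]
    rw [Algebra.smul_def, map_mul, Algebra.smul_def]
    congr 1
    change _ = Ideal.Quotient.mk J (algebraMap k A _)
    congr 1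
    rw [IsScalarTower.algebraMap_apply k B A]
    rfl
  exact Module.Finite.of_surjective F hF


lemma maxB : maximalIdeal (MvPowerSeries (Fin d) k) = Ideal.span (Set.range MvPowerSeries.X) := by
  ext f
  rw [mem_maximalIdeal, mem_nonunits_iff, MvPowerSeries.isUnit_iff_constantCoeff,
    isUnit_iff_ne_zero, not_not]
  have := mem_span_pow' (fun _ => 1) f
  simp only [pow_one] at this
  rw [show (Set.range (MvPowerSeries.X : Fin d → MvPowerSeries (Fin d) k)) =
    Set.range (fun i => MvPowerSeries.X i) from rfl, this]
  constructor
  · intro h α hα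
    have : α = 0 := by ext i; have := hα i; simp; omega
    rw [this]; exact h
  · intro h
    exact h 0 (by simp)

lemma dimB : ringKrullDim (MvPowerSeries (Fin d) k) ≤ d := by
  refine (ringKrullDim_le_spanFinrank_maximalIdeal _).trans ?_
  rw [maxB]
  have h1 := Submodule.spanFinrank_span_le_ncard_of_finite (R := MvPowerSeries (Fin d) k)
    (Set.finite_range (MvPowerSeries.X : Fin d → MvPowerSeries (Fin d) k))
  have h2 : (Set.range (MvPowerSeries.X : Fin d → MvPowerSeries (Fin d) k)).ncard ≤ d := by
    rw [← Set.image_univ]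
    refine (Set.ncard_image_le Set.finite_univ).trans ?_
    simp
  exact_mod_cast h1.trans h2

lemma inj_B [Module.Finite (MvPowerSeries (Fin d) k) A] (P : Ideal A)
    (hdim : ringKrullDim (A ⧸ P) = d) : ∀ f : MvPowerSeries (Fin d) k, f ≠ 0 →
    algebraMap _ A f ∉ P := by
  set B := MvPowerSeries (Fin d) k
  intro f hf hfP
  let g : B ⧸ Ideal.span {f} →+* A ⧸ P := Ideal.Quotient.lift _
    ((Ideal.Quotient.mk P).comp (algebraMap B A)) (by
      intro a ha
      obtain ⟨c, rfl⟩ := Ideal.mem_span_singleton'.mp ha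
      rw [RingHom.comp_apply, Ideal.Quotient.eq_zero_iff_mem, map_mul]
      exact Ideal.mul_mem_left _ _ hfP)
  letI := g.toAlgebra
  have : Algebra.IsIntegral (B ⧸ Ideal.span {f}) (A ⧸ P) := by
    constructor
    intro y
    obtain ⟨y, rfl⟩ := Ideal.Quotient.mk_surjective y
    have h1 : IsIntegral B y := Algebra.IsIntegral.isIntegral y
    obtain ⟨q, hq, hq2⟩ := h1
    refine ⟨q.map (Ideal.Quotient.mk _), hq.map _, ?_⟩
    rw [Polynomial.eval₂_map]
    have : (algebraMap (B ⧸ Ideal.span {f}) (A ⧸ P)).comp (Ideal.Quotient.mk _) =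
      (Ideal.Quotient.mk P).comp (algebraMap B A) := by ext; rfl
    rw [this, ← Polynomial.hom_eval₂, hq2, map_zero]
  have h1 : ringKrullDim (A ⧸ P) ≤ ringKrullDim (B ⧸ Ideal.span {f}) := by
    apply Order.krullDim_le_of_strictMono
      (PrimeSpectrum.comap (algebraMap (B ⧸ Ideal.span {f}) (A ⧸ P)))
    intro I J h
    exact Ideal.IsIntegral.comap_lt_comap h
  have h2 := ringKrullDim_quotient_succ_le_of_nonZeroDivisor (mem_nonZeroDivisors_of_ne_zero hf)
  rw [hdim] at h1
  have h3 : ((d : WithBot ℕ∞) + 1) ≤ d := (add_le_add_left h1 1).trans (h2.trans dimB)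
  have : d + 1 ≤ d := by exact_mod_cast h3
  omega

lemma nzd_of_circ {R : Type*} [CommRing R] [IsReduced R] (c : R)
    (hc : ∀ P ∈ minimalPrimes R, c ∉ P) (a : R) (h : c * a = 0) : a = 0 := by
  have : a ∈ nilradical R := by
    rw [nilradical, Ideal.radical, ← Ideal.radical] 
    rw [← Ideal.sInf_minimalPrimes, Ideal.mem_sInf]
    intro P hP
    have := Ideal.minimalPrimes_isPrime hP
    exact (this.mem_or_mem (by rw [h]; exact P.zero_mem)).resolve_left (hc P hP)
  rwa [nilradical_eq_zero] at this
end
end GN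


namespace GN
open IsLocalRing

/-- power series ring in `d` variables -/
abbrev PS (k : Type*) (d : ℕ) := MvPowerSeries (Fin d) k

/-- the ideal generated by the `l`-th powers of a family -/
abbrev pw {R : Type*} [CommRing R] {d : ℕ} (x : Fin d → R) (l : ℕ) : Ideal R :=
  Ideal.span (Set.range fun i => x i ^ l)

lemma prod_mul_pw {R : Type*} [CommRing R] {d : ℕ} (x : Fin d → R) (m l : ℕ) (z : R)
    (hz : z ∈ pw x l) : (∏ i, x i) ^ m * z ∈ pw x (m + l) := by
  classical
  induction hz using Submodule.span_induction with
  | zero => simp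
  | add u v _ _ h1 h2 => rw [mul_add]; exact Ideal.add_mem _ h1 h2
  | smul r u _ h => rw [smul_eq_mul, mul_left_comm]; exact Ideal.mul_mem_left _ _ h
  | mem u hu =>
    obtain ⟨i, rfl⟩ := hu
    dsimp only
    rw [← Finset.prod_erase_mul _ _ (Finset.mem_univ i), mul_pow, mul_assoc, ← pow_add]
    exact Ideal.mul_mem_left _ _ (Ideal.subset_span ⟨i, rfl⟩)

/-- the limit closure of the ideal generated by `x` -/
def limI {R : Type*} [CommRing R] {d : ℕ} (x : Fin d → R) : Ideal R where
  carrier := {z | ∃ n : ℕ, (∏ i, x i) ^ n * z ∈ pw x (n + 1)}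
  zero_mem' := ⟨0, by simp⟩
  smul_mem' r z := by
    rintro ⟨n, h⟩
    exact ⟨n, by rw [smul_eq_mul, mul_left_comm]; exact Ideal.mul_mem_left _ _ h⟩
  add_mem' := by
    rintro a b ⟨n, hn⟩ ⟨m, hm⟩
    refine ⟨n + m, ?_⟩
    rw [mul_add]
    refine Ideal.add_mem _ ?_ ?_
    · have := prod_mul_pw x m (n + 1) _ hn
      rw [← mul_assoc, ← pow_add] at this
      rwa [add_comm n m, add_assoc]
    · have := prod_mul_pw x n (m + 1) _ hm
      rw [← mul_assoc, ← pow_add] at this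
      rwa [add_assoc]

lemma le_limI {R : Type*} [CommRing R] {d : ℕ} (x : Fin d → R) :
    Ideal.span (Set.range x) ≤ limI x := by
  intro z hz
  exact ⟨0, by simpa [pw] using hz⟩

section gen
variable {R M : Type*} [CommRing R] [AddCommGroup M] [Module R M] {ι : Type*} [Fintype ι]

lemma smul_span_coord (f : ι → M) (c : R) (I : Ideal R) (N : Submodule R M)
    (hc : ∀ a ∈ N, c • a ∈ Submodule.span R (Set.range f)) (w : M)
    (hw : w ∈ I • N) : ∃ g : ι → R, (∀ j, g j ∈ I) ∧ c • w = ∑ j, g j • f j := by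
  induction hw using Submodule.smul_induction_on' with
  | smul r hr n hn =>
    obtain ⟨g, hg⟩ := (Submodule.mem_span_range_iff_exists_fun R).mp (hc n hn)
    refine ⟨fun j => r * g j, fun j => Ideal.mul_mem_right _ _ hr, ?_⟩
    rw [smul_comm, ← hg, Finset.smul_sum]
    simp only [smul_smul]
  | add u _ v _ h1 h2 =>
    obtain ⟨g, hg, e⟩ := h1
    obtain ⟨g', hg', e'⟩ := h2
    refine ⟨fun j => g j + g' j, fun j => Ideal.add_mem _ (hg j) (hg' j), ?_⟩
    rw [smul_add, e, e', ← Finset.sum_add_distrib]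
    simp only [add_smul]

lemma eq_of_li {f : ι → M} (hf : LinearIndependent R f) {g g' : ι → R}
    (h : ∑ j, g j • f j = ∑ j, g' j • f j) : g = g' := by
  have := Fintype.linearIndependent_iff.mp hf (fun j => g j - g' j) (by
    simp only [sub_smul, Finset.sum_sub_distrib, h, sub_self])
  ext j
  exact sub_eq_zero.mp (this j)

end gen

lemma exists_free {R M : Type*} [CommRing R] [IsDomain R] [AddCommGroup M] [Module R M]
    [Module.Finite R M] :
    ∃ (n : ℕ) (f : Fin n → M), LinearIndependent R f ∧ ∃ c : R, c ≠ 0 ∧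
      ∀ a : M, c • a ∈ Submodule.span R (Set.range f) := by
  classical
  obtain ⟨s, v, hv⟩ := Module.Finite.exists_fin (R := R) (M := M)
  obtain ⟨T, hT, hT2⟩ := exists_maximal_linearIndepOn R v
  have h1 : ∀ i, ∃ a : R, a ≠ 0 ∧ a • v i ∈ Submodule.span R (v '' T) := by
    intro i
    by_cases hi : i ∈ T
    · exact ⟨1, one_ne_zero, by rw [one_smul]; exact Submodule.subset_span ⟨i, hi, rfl⟩⟩
    · exact hT2 i hi
  choose a ha ha2 using h1
  let e := Fintype.equivFin T
  refine ⟨Fintype.card T, fun j => v (e.symm j), ?_, ∏ i, a i, ?_, ?_⟩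
  · exact hT.linearIndependent.comp _ e.symm.injective
  · exact Finset.prod_ne_zero_iff.mpr fun i _ => ha i
  · intro m
    have hr : Set.range (fun j => v (e.symm j)) = v '' T := by
      ext y
      constructor
      · rintro ⟨j, rfl⟩; exact ⟨_, (e.symm j).2, rfl⟩
      · rintro ⟨i, hi, rfl⟩; exact ⟨e ⟨i, hi⟩, by simp⟩
    rw [hr]
    have hm : m ∈ Submodule.span R (Set.range v) := by rw [hv]; trivial
    induction hm using Submodule.span_induction with
    | zero => simp
    | add u w _ _ h1 h2 => rw [smul_add]; exact Submodule.add_mem _ h1 h2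
    | smul r u _ h => rw [smul_comm]; exact Submodule.smul_mem _ _ h
    | mem u hu =>
      obtain ⟨i, rfl⟩ := hu
      rw [← Finset.prod_erase_mul _ _ (Finset.mem_univ i), mul_smul]
      exact Submodule.smul_mem _ _ (ha2 i)

section main
variable {k A : Type*} [Field k] [CommRing A] {d : ℕ} [Algebra (PS k d) A]

lemma map_pw (l : ℕ) : (pw (MvPowerSeries.X : Fin d → PS k d) l).map (algebraMap (PS k d) A) =
    pw (xx (d := d) k A) l := by
  rw [pw, Ideal.map_span, ← Set.range_comp]
  congr 2
  ext i
  simp [xx]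

lemma mem_pw_iff (l : ℕ) (a : A) : a ∈ pw (xx (d := d) k A) l ↔
    a ∈ (pw (MvPowerSeries.X : Fin d → PS k d) l • ⊤ : Submodule (PS k d) A) := by
  rw [Ideal.smul_top_eq_map, Submodule.restrictScalars_mem, map_pw]

lemma prod_xx (m : ℕ) (a : A) : (∏ i, xx (d := d) k A i) ^ m * a =
    (∏ i, (MvPowerSeries.X i : PS k d) ^ m) • a := by
  rw [Algebra.smul_def, map_prod, ← Finset.prod_pow]
  simp [xx]

lemma free_colon {ι : Type*} [Fintype ι] {f : ι → A} (hf : LinearIndependent (PS k d) f)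
    (c : PS k d) (hc : ∀ a : A, c • a ∈ Submodule.span (PS k d) (Set.range f))
    (m l : ℕ) (w : A) (hw : (∏ i, xx (d := d) k A i) ^ m * w ∈ pw (xx (d := d) k A) (m + l)) :
    c • w ∈ pw (xx (d := d) k A) l := by
  rw [prod_xx, mem_pw_iff] at hw
  obtain ⟨g', hg', e⟩ := smul_span_coord f c _ _ (fun a _ => hc a) _ hw
  obtain ⟨g, hg⟩ := (Submodule.mem_span_range_iff_exists_fun _).mp (hc w)
  rw [smul_comm, ← hg, Finset.smul_sum] at e
  simp only [smul_smul] at e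
  have h2 := eq_of_li hf e
  rw [← hg, mem_pw_iff]
  refine Submodule.sum_mem _ fun j _ => Submodule.smul_mem_smul ?_ trivial
  apply ps_colon m l
  have := hg' j
  rw [← h2] at this
  exact this

variable [Algebra k A] [IsScalarTower k (PS k d) A]

lemma coord_pw {ι : Type*} [Fintype ι] (a : ι → A)
    (ha : LinearIndependent k (fun j => Ideal.Quotient.mk (limI (xx (d := d) k A)) (a j)))
    (N : ℕ) (g : ι → PS k d) (hg : ∑ j, g j • a j ∈ pw (xx (d := d) k A) (N + 1)) (j : ι) :
    g j ∈ pw (MvPowerSeries.X : Fin d → PS k d) (N + 1) := by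
  by_contra hne
  obtain ⟨μ, c, ⟨j0, hj0⟩, hμ⟩ := ps_socle N g ⟨j, hne⟩
  apply hj0
  refine Fintype.linearIndependent_iff.mp ha c ?_ j0
  have : ∑ j, c j • a j ∈ limI (xx (d := d) k A) := by
    refine ⟨N, ?_⟩
    rw [prod_xx, mem_pw_iff]
    rw [mem_pw_iff] at hg
    have h1 : (∏ i, (MvPowerSeries.X i : PS k d) ^ N) • ∑ j, c j • a j =
      μ • (∑ j, g j • a j) - ∑ j, (μ * g j - MvPowerSeries.C (c j) *
        (∏ i : Fin d, (MvPowerSeries.X i : PS k d) ^ N)) • a j := by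
      simp only [Finset.smul_sum, sub_smul, Finset.sum_sub_distrib, mul_smul, sub_sub_cancel]
      refine Finset.sum_congr rfl fun j _ => ?_
      have h0 : c j • a j = (MvPowerSeries.C (c j) : PS k d) • a j := by
        rw [Algebra.smul_def, Algebra.smul_def, IsScalarTower.algebraMap_apply k (PS k d) A]
        rfl
      rw [h0, smul_comm]
    rw [h1]
    exact Submodule.sub_mem _ (Submodule.smul_mem _ _ hg)
      (Submodule.sum_mem _ fun j _ => Submodule.smul_mem_smul (hμ j) trivial)
  rw [← Ideal.Quotient.eq_zero_iff_mem, map_sum] at this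
  exact this

lemma eq_zero_of_pw (g : PS k d) (h : ∀ N : ℕ, g ∈ pw (MvPowerSeries.X : Fin d → PS k d) (N + 1)) :
    g = 0 := by
  ext α
  obtain ⟨N, hN⟩ : ∃ N : ℕ, ∀ i, α i < N + 1 :=
    ⟨∑ i, α i, fun i => Nat.lt_succ_of_le (Finset.single_le_sum (f := fun i => α i) (fun _ _ => Nat.zero_le _) (Finset.mem_univ i))⟩
  exact (mem_span_pow' (fun _ => N + 1) g).mp (h N) α hN

lemma li_of_quot {ι : Type*} [Fintype ι] (a : ι → A)
    (ha : LinearIndependent k (fun j => Ideal.Quotient.mk (limI (xx (d := d) k A)) (a j))) :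
    LinearIndependent (PS k d) a := by
  rw [Fintype.linearIndependent_iff]
  intro g hg j
  exact eq_zero_of_pw _ fun N => coord_pw a ha N g (by rw [hg]; exact Ideal.zero_mem _) j

end main
end GN


namespace GN
open IsLocalRing Filter Topology

section main
variable {k A : Type*} [Field k] [CommRing A] {d : ℕ} [Algebra (PS k d) A]
variable [Algebra k A] [IsScalarTower k (PS k d) A]

lemma map_n : (Ideal.span (Set.range (MvPowerSeries.X : Fin d → PS k d))).map
    (algebraMap (PS k d) A) = Ideal.span (Set.range (xx (d := d) k A)) := by
  rw [Ideal.map_span, ← Set.range_comp]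
  rfl

variable [Module.Finite (PS k d) A]

lemma artin_rees {t : ℕ} (a : Fin t → A) (ha : LinearIndependent (PS k d) a) :
    ∃ c : ℕ, ∀ m : ℕ, ∀ g : Fin t → PS k d,
      ∑ j, g j • a j ∈ Ideal.span (Set.range (xx (d := d) k A)) ^ (m + c) →
      ∀ j, g j ∈ Ideal.span (Set.range (MvPowerSeries.X : Fin d → PS k d)) ^ m := by
  set n : Ideal (PS k d) := Ideal.span (Set.range (MvPowerSeries.X : Fin d → PS k d)) with hn
  obtain ⟨c, hc⟩ := n.exists_pow_inf_eq_pow_smul (Submodule.span (PS k d) (Set.range a))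
  refine ⟨c, fun m g hg j => ?_⟩
  have h1 : ∑ j, g j • a j ∈ n ^ (m + c) • (⊤ : Submodule (PS k d) A) ⊓
      Submodule.span (PS k d) (Set.range a) := by
    refine ⟨?_, (Submodule.mem_span_range_iff_exists_fun _).mpr ⟨g, rfl⟩⟩
    change _ ∈ n ^ (m + c) • (⊤ : Submodule (PS k d) A)
    rw [Ideal.smul_top_eq_map, Submodule.restrictScalars_mem, Ideal.map_pow, map_n]
    exact hg
  rw [hc _ (Nat.le_add_left _ _), Nat.add_sub_cancel] at h1
  obtain ⟨g', hg', e⟩ := smul_span_coord a 1 _ _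
    (fun a ha => by rw [one_smul]; exact ha.2) _ h1
  rw [one_smul] at e
  rw [eq_of_li ha e]
  exact hg' j

lemma span_top (htf : ∀ b : PS k d, b ≠ 0 → ∀ a : A, b • a = 0 → a = 0) {s : ℕ} (a : Fin s → A)
    (ha : LinearIndependent k (fun j => Ideal.Quotient.mk (limI (xx (d := d) k A)) (a j)))
    (hmax : ∀ f : Fin (s + 1) → A, ¬ LinearIndependent (PS k d) f) (w : A) :
    w ∈ Submodule.span (PS k d) (Set.range a) := by
  have hli := li_of_quot a ha
  have h1 := hmax (Fin.cons w a)
  rw [Fintype.not_linearIndependent_iff] at h1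
  obtain ⟨g, hg, i0, hi0⟩ := h1
  rw [Fin.sum_univ_succ] at hg
  simp only [Fin.cons_zero, Fin.cons_succ] at hg
  have hb : g 0 ≠ 0 := by
    intro h0
    rw [h0, zero_smul, zero_add] at hg
    have := Fintype.linearIndependent_iff.mp hli _ hg
    refine hi0 ?_
    refine Fin.cases h0 (fun j => this j) i0
  have hdiv : ∀ j : Fin s, g j.succ ∈ Ideal.span {g 0} := by
    intro j
    have hH : IsHausdorff (maximalIdeal (PS k d)) (PS k d ⧸ Ideal.span {g 0}) := inferInstance
    by_contra hne
    apply hne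
    rw [← Ideal.Quotient.eq_zero_iff_mem]
    refine hH.haus _ fun n => ?_
    rw [SModEq.zero]
    by_contra hn
    have h2 : g j.succ ∉ Ideal.span {g 0} ⊔ pw (MvPowerSeries.X : Fin d → PS k d) (n + 1) := by
      intro h3
      obtain ⟨u, hu, v, hv, e⟩ := Submodule.mem_sup.mp h3
      apply hn
      rw [← e, map_add, Ideal.Quotient.eq_zero_iff_mem.mpr hu, zero_add]
      have hv2 : v ∈ maximalIdeal (PS k d) ^ n := by
        refine (Ideal.span_le.mpr ?_ : pw (MvPowerSeries.X : Fin d → PS k d) (n + 1) ≤ _) hv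
        rintro _ ⟨i, rfl⟩
        refine Ideal.pow_le_pow_right (Nat.le_succ n) (Ideal.pow_mem_pow ?_ _)
        rw [maxB]
        exact Ideal.subset_span ⟨i, rfl⟩
      have : Ideal.Quotient.mk (Ideal.span {g 0}) v = v • (1 : PS k d ⧸ Ideal.span {g 0}) := by
        change _ = Ideal.Quotient.mk (Ideal.span {g 0}) (v • 1)
        rw [smul_eq_mul, mul_one]
      rw [this]
      exact Submodule.smul_mem_smul hv2 trivial
    obtain ⟨y, hy1, hy2⟩ := ps_dual n _ _ h2
    apply hy2
    refine coord_pw a ha n (fun j => y * g j.succ) ?_ j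
    have h4 : ∑ j : Fin s, (y * g j.succ) • a j = -((y * g 0) • w) := by
      rw [eq_neg_iff_add_eq_zero, add_comm]
      have := congrArg (fun z => y • z) hg
      simpa [smul_add, Finset.smul_sum, smul_smul] using this
    rw [h4, mem_pw_iff]
    exact Submodule.neg_mem _ (Submodule.smul_mem_smul hy1 trivial)
  choose h hh using fun j => Ideal.mem_span_singleton'.mp (hdiv j)
  have h5 : w + ∑ j, h j • a j = 0 := by
    apply htf (g 0) hb
    rw [← hg, smul_add, Finset.smul_sum]
    congr 1
    refine Finset.sum_congr rfl fun j _ => ?_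
    rw [← hh j, smul_smul, mul_comm]
  rw [eq_neg_of_add_eq_zero_left h5]
  exact Submodule.neg_mem _ (Submodule.sum_mem _ fun j _ =>
    Submodule.smul_mem _ _ (Submodule.subset_span ⟨j, rfl⟩))

variable [IsLocalRing A] [IsNoetherianRing A]

lemma rank_le_aux (hres : ∀ a : A, ∃ c : k, a - algebraMap k A c ∈ maximalIdeal A)
    (hrad : (Ideal.span (Set.range (xx (d := d) k A))).radical = maximalIdeal A)
    {t : ℕ} (a : Fin t → A) (ha : LinearIndependent (PS k d) a) :
    ∃ c : ℕ, ∀ M : ℕ, t * (M + 1) ^ d ≤ d.factorial *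
      (Module.length A (A ⧸ Ideal.span (Set.range (xx (d := d) k A)) ^ (M + 1 + c))).toNat := by
  classical
  obtain ⟨c, hc⟩ := artin_rees a ha
  refine ⟨c, fun M => ?_⟩
  obtain ⟨S, hS, hS2⟩ := card_low_deg d M
  set J := Ideal.span (Set.range (xx (d := d) k A)) ^ (M + 1 + c) with hJ
  have hJr : J.radical = maximalIdeal A := by rw [hJ, Ideal.radical_pow _ (by omega), hrad]
  obtain ⟨hfin, hlen⟩ := finite_of_finLen hres _ (finLen hJr)
  have key : t * S.card ≤ Module.finrank k (A ⧸ J) := by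
    let v : Fin t × S → A ⧸ J := fun q =>
      Ideal.Quotient.mk J ((MvPowerSeries.monomial (q.2 : Fin d →₀ ℕ) (1 : k) : PS k d) • a q.1)
    have hv : LinearIndependent k v := by
      rw [Fintype.linearIndependent_iff]
      intro u hu q
      let g : Fin t → PS k d := fun j => ∑ α : S, MvPowerSeries.monomial (α : Fin d →₀ ℕ) (u (j, α))
      have h1 : ∑ j, g j • a j ∈ J := by
        rw [← Ideal.Quotient.eq_zero_iff_mem, ← hu, Fintype.sum_prod_type, map_sum]
        refine Finset.sum_congr rfl fun j _ => ?_
        simp only [g, Finset.sum_smul, map_sum]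
        refine Finset.sum_congr rfl fun α _ => ?_
        change _ = Ideal.Quotient.mk J (u (j, α) • (_ • _))
        congr 1
        rw [← smul_assoc]
        congr 1
        rw [← map_smul, smul_eq_mul, mul_one]
      have h2 := ps_pow (M + 1) _ (hc (M + 1) g h1 q.1) q.2 (hS _ q.2.2)
      simp only [g, map_sum, MvPowerSeries.coeff_monomial] at h2
      simpa [Subtype.coe_inj] using h2
    have := hv.fintype_card_le_finrank
    simpa using this
  rw [hlen, ENat.toNat_natCast]
  calc t * (M + 1) ^ d ≤ t * (d.factorial * S.card) := Nat.mul_le_mul_left _ hS2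
    _ = d.factorial * (t * S.card) := by ring
    _ ≤ _ := Nat.mul_le_mul_left _ key

lemma rank_le (hres : ∀ a : A, ∃ c : k, a - algebraMap k A c ∈ maximalIdeal A)
    (hrad : (Ideal.span (Set.range (xx (d := d) k A))).radical = maximalIdeal A) (eJ : ℝ)
    (heJ : Tendsto (fun n : ℕ => (d.factorial : ℝ) *
      ((Module.length A (A ⧸ Ideal.span (Set.range (xx (d := d) k A)) ^ n)).toNat : ℝ) /
        (n : ℝ) ^ d) atTop (nhds eJ))
    {t : ℕ} (a : Fin t → A) (ha : LinearIndependent (PS k d) a) : (t : ℝ) ≤ eJ := by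
  obtain ⟨c, hc⟩ := rank_le_aux hres hrad a ha
  have h1 := heJ.comp (tendsto_add_atTop_nat (1 + c))
  have h2 : Tendsto (fun M : ℕ => (t : ℝ) * (((M : ℝ) + 1) / ((M : ℝ) + (1 + c))) ^ d) atTop
      (nhds (t * 1 ^ d)) := by
    refine Tendsto.const_mul _ (Tendsto.pow ?_ d)
    have h3 : Tendsto (fun M : ℕ => 1 - (c : ℝ) / ((M : ℝ) + (1 + c))) atTop (nhds (1 - 0)) := by
      refine Tendsto.sub tendsto_const_nhds ?_
      refine Tendsto.div_atTop tendsto_const_nhds ?_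
      exact tendsto_atTop_add_const_right _ _ tendsto_natCast_atTop_atTop
    rw [sub_zero] at h3
    refine h3.congr fun M => ?_
    have : (M : ℝ) + (1 + c) ≠ 0 := by positivity
    field_simp
    ring
  rw [one_pow, mul_one] at h2
  refine le_of_tendsto_of_tendsto' h2 h1 fun M => ?_
  simp only [Function.comp_apply]
  push_cast
  rw [div_pow, ← mul_div_assoc]
  refine div_le_div_of_nonneg_right ?_ (by positivity)
  have := hc M
  rw [add_assoc] at this
  exact_mod_cast this

end main
end GN

open IsLocalRing Filter Topology

namespace GN

/-- permutable-regular-sequence type condition on a family of elements -/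
def Reg {A : Type*} [CommRing A] {d : ℕ} (x : Fin d → A) : Prop :=
  ∀ (i : Fin d) (a : Fin d → ℕ) (z : A),
    x i * z ∈ Ideal.span ((fun j => x j ^ a j) '' {j | j ≠ i}) →
    z ∈ Ideal.span ((fun j => x j ^ a j) '' {j | j ≠ i})

lemma pw_le_bracket {A : Type*} [CommRing A] {d : ℕ} (x : Fin d → A) (q : ℕ) :
    pw x q ≤ (Ideal.span (Set.range x)).bracketPow q := by
  refine Ideal.span_le.mpr ?_
  rintro _ ⟨i, rfl⟩
  exact Ideal.subset_span ⟨x i, Ideal.subset_span ⟨i, rfl⟩, rfl⟩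

lemma pow_mem_pw {A : Type*} [CommRing A] (p : ℕ) [Fact p.Prime] [CharP A p] {d : ℕ}
    (x : Fin d → A) (m : ℕ) (z : A) (hz : z ∈ pw x m) (e : ℕ) : z ^ p ^ e ∈ pw x (m * p ^ e) := by
  obtain ⟨c, rfl⟩ := (Ideal.mem_span_range_iff_exists_fun).mp hz
  rw [sum_pow_char_pow]
  refine Ideal.sum_mem _ fun i _ => ?_
  rw [mul_pow, ← pow_mul]
  exact Ideal.mul_mem_left _ _ (Ideal.subset_span ⟨i, rfl⟩)

section main
variable {k A : Type*} [Field k] [CommRing A] {d : ℕ} [Algebra (PS k d) A]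

lemma free_reg {ι : Type*} [Fintype ι] {f : ι → A} (hf : LinearIndependent (PS k d) f)
    (hc : ∀ a : A, a ∈ Submodule.span (PS k d) (Set.range f)) : Reg (xx (d := d) k A) := by
  intro i a w hw
  set I : Ideal (PS k d) := Ideal.span
    ((fun j => (MvPowerSeries.X j : PS k d) ^ a j) '' {j | j ≠ i}) with hI
  have hmap : I.map (algebraMap (PS k d) A) =
      Ideal.span ((fun j => xx (d := d) k A j ^ a j) '' {j | j ≠ i}) := by
    rw [hI, Ideal.map_span, ← Set.image_comp]
    congr 2
    ext j
    simp [xx]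
  have hiff : ∀ w, w ∈ Ideal.span ((fun j => xx (d := d) k A j ^ a j) '' {j | j ≠ i}) ↔
      w ∈ (I • ⊤ : Submodule (PS k d) A) := by
    intro w
    rw [Ideal.smul_top_eq_map, Submodule.restrictScalars_mem, hmap]
  rw [hiff] at hw ⊢
  obtain ⟨g', hg', e⟩ := smul_span_coord f 1 _ _ (fun a _ => by rw [one_smul]; exact hc a) _ hw
  obtain ⟨g, hg⟩ := (Submodule.mem_span_range_iff_exists_fun _).mp (hc w)
  have e2 : xx (d := d) k A i * w = (MvPowerSeries.X i : PS k d) • w := by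
    rw [Algebra.smul_def]
  rw [one_smul, e2, ← hg, Finset.smul_sum] at e
  simp only [smul_smul] at e
  have h2 := eq_of_li hf e
  rw [← hg]
  refine Submodule.sum_mem _ fun j _ => Submodule.smul_mem_smul ?_ trivial
  apply ps_reg a i
  have := hg' j
  rw [← h2] at this
  exact this

lemma lim_le_tc (p : ℕ) [Fact p.Prime] [CharP A p] [Module.Finite (PS k d) A]
    (hcirc : ∀ b : PS k d, b ≠ 0 → algebraMap (PS k d) A b ∈ ringCirc A) (z : A)
    (hz : z ∈ limI (xx (d := d) k A)) :
    z ∈ tightClosure p (Ideal.span (Set.range (xx (d := d) k A))) := by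
  haveI : IsDomain (PS k d) := NoZeroDivisors.to_isDomain _
  obtain ⟨r, f, hf, c, hc, hc2⟩ := exists_free (R := PS k d) (M := A)
  obtain ⟨n, hn⟩ := hz
  refine ⟨algebraMap (PS k d) A c, hcirc c hc, 0, fun e _ => ?_⟩
  apply pw_le_bracket
  rw [← Algebra.smul_def]
  apply free_colon hf c hc2 (n * p ^ e)
  have := pow_mem_pw p _ _ _ hn e
  rw [mul_pow, ← pow_mul] at this
  rwa [add_mul, one_mul] at this

variable [Algebra k A] [IsScalarTower k (PS k d) A]
variable [IsLocalRing A] [IsNoetherianRing A]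

lemma core (p : ℕ) [Fact p.Prime] [CharP A p] [Module.Finite (PS k d) A]
    (hcirc : ∀ b : PS k d, b ≠ 0 → algebraMap (PS k d) A b ∈ ringCirc A)
    (htf : ∀ b : PS k d, b ≠ 0 → ∀ a : A, b • a = 0 → a = 0)
    (hres : ∀ a : A, ∃ c : k, a - algebraMap k A c ∈ maximalIdeal A)
    (x : Fin d → A) (hx : x = xx (d := d) k A)
    (hrad : (Ideal.span (Set.range x)).radical = maximalIdeal A) (eJ : ℝ)
    (heJ : Tendsto (fun n : ℕ => (d.factorial : ℝ) *
      ((Module.length A (A ⧸ Ideal.span (Set.range x) ^ n)).toNat : ℝ) /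
        (n : ℝ) ^ d) atTop (nhds eJ)) :
    (∃ l : ℕ, Module.length A (A ⧸ Ideal.span (tightClosure p (Ideal.span (Set.range x)))) = l ∧
      (l : ℝ) ≤ eJ) ∧
    ((∃ l : ℕ, Module.length A (A ⧸ Ideal.span (tightClosure p (Ideal.span (Set.range x)))) = l ∧
      (l : ℝ) = eJ) → Reg x ∧ tightClosure p (Ideal.span (Set.range x)) ⊆
        (Ideal.span (Set.range x) : Set A)) := by
  subst hx
  set x := xx (d := d) k A with hx
  set J := Ideal.span (Set.range x) with hJ
  set T := Ideal.span (tightClosure p J) with hT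
  have hlimT : limI x ≤ T := fun z hz => Ideal.subset_span (lim_le_tc p hcirc z hz)
  have hlim : IsFiniteLength A (A ⧸ limI x) := by
    rw [← Module.length_ne_top_iff]
    exact ne_top_of_le_ne_top (Module.length_ne_top_iff.mpr (finLen hrad))
      (Module.length_le_of_surjective (Submodule.factor (le_limI x))
        (Submodule.factor_surjective _))
  obtain ⟨hfin, hlen⟩ := finite_of_finLen hres _ hlim
  set s := Module.finrank k (A ⧸ limI x) with hs
  have hle : Module.length A (A ⧸ T) ≤ s := by
    rw [← hlen]
    exact Module.length_le_of_surjective (Submodule.factor hlimT) (Submodule.factor_surjective _)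
  let b := Module.finBasis k (A ⧸ limI x)
  choose a ha using fun j => Ideal.Quotient.mk_surjective (b j)
  have hli : LinearIndependent k (fun j => Ideal.Quotient.mk (limI x) (a j)) := by
    simp only [ha]
    exact b.linearIndependent
  have hli2 := li_of_quot a hli
  have hse : (s : ℝ) ≤ eJ := rank_le hres hrad eJ heJ a hli2
  refine ⟨?_, ?_⟩
  · obtain ⟨l, hl⟩ := ENat.ne_top_iff_exists.mp (ne_top_of_le_ne_top (ENat.natCast_ne_top s) hle)
    refine ⟨l, hl.symm, ?_⟩
    rw [← hl] at hle
    have : l ≤ s := by exact_mod_cast hle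
    exact le_trans (by exact_mod_cast this) hse
  · rintro ⟨l, hl, hl2⟩
    rw [hl] at hle
    have hls : l ≤ s := by exact_mod_cast hle
    have hsl : (s : ℝ) ≤ l := hl2 ▸ hse
    have hsl : s = l := le_antisymm (by exact_mod_cast hsl) hls
    have hspan : ∀ w : A, w ∈ Submodule.span (PS k d) (Set.range a) := by
      refine span_top htf a hli ?_
      intro f hf
      have := rank_le hres hrad eJ heJ f hf
      rw [← hl2, ← hs, hsl] at this
      push_cast at this
      linarith
    refine ⟨free_reg hli2 hspan, ?_⟩
    have hlimJ : limI x = J := by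
      refine le_antisymm ?_ (le_limI x)
      rintro z ⟨n, hn⟩
      have := free_colon hli2 1 (fun a => by rw [one_smul]; exact hspan a) n 1 z hn
      rw [one_smul] at this
      simpa [pw] using this
    rw [hlimJ] at hlimT hlen
    have hJl : Module.length A (A ⧸ J) = l := by
      rw [hlen, ← hsl, hs, hlimJ]
    have hTJ : T ≤ J := by
      set f := Submodule.factor hlimT with hf
      have h1 := Module.length_eq_add_of_exact (LinearMap.ker f).subtype f
        (Submodule.subtype_injective _) (Submodule.factor_surjective _)
        (LinearMap.exact_subtype_ker_map f)
      rw [hJl, hl] at h1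
      have h2 : Module.length A (LinearMap.ker f) = 0 := by
        by_contra hne
        have h3 : Module.length A (LinearMap.ker f) ≠ ⊤ := by
          intro h; rw [h] at h1; simp at h1
        obtain ⟨q, hq⟩ := ENat.ne_top_iff_exists.mp h3
        rw [← hq] at h1 hne
        have h4 : l = q + l := by exact_mod_cast h1
        have : q = 0 := by omega
        exact hne (by simp [this])
      rw [Module.length_eq_zero_iff, Submodule.subsingleton_iff_eq_bot] at h2
      have hinj := LinearMap.ker_eq_bot.mp h2
      intro z hz
      rw [← Ideal.Quotient.eq_zero_iff_mem]
      apply hinj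
      rw [map_zero]
      exact Ideal.Quotient.eq_zero_iff_mem.mpr hz
    exact fun z hz => hTJ (Ideal.subset_span hz)

end main
end GN

open IsLocalRing Filter Topology

namespace GN

lemma coreA (A : Type*) [CommRing A] [IsLocalRing A]
    [IsNoetherianRing A] [IsReduced A] (p : ℕ) [Fact p.Prime] [CharP A p]
    (hcomp : IsAdicComplete (IsLocalRing.maximalIdeal A) A) (d : ℕ)
    (hequi : ∀ P ∈ minimalPrimes A, ringKrullDim (A ⧸ P) = d)
    (x : Fin d → A)
    (hrad : (Ideal.span (Set.range x)).radical = maximalIdeal A) (eJ : ℝ)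
    (heJ : Tendsto (fun n : ℕ => (d.factorial : ℝ) *
      ((Module.length A (A ⧸ Ideal.span (Set.range x) ^ n)).toNat : ℝ) /
        (n : ℝ) ^ d) atTop (nhds eJ)) :
    (∃ l : ℕ, Module.length A (A ⧸ Ideal.span (tightClosure p (Ideal.span (Set.range x)))) = l ∧
      (l : ℝ) ≤ eJ) ∧
    ((∃ l : ℕ, Module.length A (A ⧸ Ideal.span (tightClosure p (Ideal.span (Set.range x)))) = l ∧
      (l : ℝ) = eJ) → Reg x ∧ tightClosure p (Ideal.span (Set.range x)) ⊆
        (Ideal.span (Set.range x) : Set A)) := by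
  obtain ⟨σ, hσ⟩ := gn_coeffField A p hcomp
  have hxm : ∀ i, x i ∈ maximalIdeal A := fun i => by
    rw [← hrad]; exact Ideal.le_radical (Ideal.subset_span ⟨i, rfl⟩)
  obtain ⟨φ, hφC, hφX⟩ := evalHom hcomp σ x hxm
  letI : Algebra (ResidueField A) A := σ.toAlgebra
  letI : Algebra (PS (ResidueField A) d) A := φ.toAlgebra
  haveI : IsScalarTower (ResidueField A) (PS (ResidueField A) d) A :=
    IsScalarTower.of_algebraMap_eq fun c => (hφC c).symm
  have hxx : x = xx (d := d) (ResidueField A) A := by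
    ext i; exact (hφX i).symm
  have hres : ∀ a : A, ∃ c : ResidueField A, a - algebraMap (ResidueField A) A c ∈
      maximalIdeal A := by
    intro a
    refine ⟨residue A a, ?_⟩
    rw [← residue_eq_zero_iff, map_sub, sub_eq_zero]
    exact (RingHom.congr_fun hσ _).symm
  haveI : Module.Finite (PS (ResidueField A) d) A := finite_B hres (by rw [← hxx]; exact hrad)
  have hcirc : ∀ b : PS (ResidueField A) d, b ≠ 0 → algebraMap _ A b ∈ ringCirc A :=
    fun b hb P hP => inj_B P (hequi P hP) b hb
  refine core p hcirc ?_ hres x hxx hrad eJ heJ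
  intro b hb a hab
  rw [Algebra.smul_def] at hab
  exact nzd_of_circ _ (hcirc b hb) a hab

end GN

open IsLocalRing Filter Topology

namespace GN

section
variable {A : Type*} [CommRing A]

/-- ideal generated by the powers `x j ^ a j`, `j ≠ i` -/
abbrev CI {d : ℕ} (x : Fin d → A) (i : Fin d) (a : Fin d → ℕ) : Ideal A :=
  Ideal.span ((fun j => x j ^ a j) '' {j | j ≠ i})

lemma frob_span (p : ℕ) [Fact p.Prime] [CharP A p] (S : Set A) (z : A) (hz : z ∈ Ideal.span S)
    (e : ℕ) : z ^ p ^ e ∈ Ideal.span ((fun s => s ^ p ^ e) '' S) := by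
  induction hz using Submodule.span_induction with
  | zero => rw [zero_pow (pow_ne_zero _ (Fact.out : p.Prime).ne_zero)]; exact Ideal.zero_mem _
  | add u v _ _ h1 h2 => rw [add_pow_char_pow]; exact Ideal.add_mem _ h1 h2
  | smul r u _ h => rw [smul_eq_mul, mul_pow]; exact Ideal.mul_mem_left _ _ h
  | mem u hu => exact Ideal.subset_span ⟨u, hu, rfl⟩

lemma bracket_eq (p : ℕ) [Fact p.Prime] [CharP A p] {d : ℕ} (x : Fin d → A) (e : ℕ) :
    (Ideal.span (Set.range x)).bracketPow (p ^ e) = pw x (p ^ e) := by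
  refine le_antisymm ?_ (pw_le_bracket x _)
  refine Ideal.span_le.mpr ?_
  rintro _ ⟨z, hz, rfl⟩
  have := frob_span p _ z hz e
  rw [← Set.range_comp] at this
  exact this

lemma bracket_mono {I J : Ideal A} (h : I ≤ J) (q : ℕ) : I.bracketPow q ≤ J.bracketPow q :=
  Ideal.span_mono (Set.image_mono h)

lemma tc_mono (p : ℕ) {I J : Ideal A} (h : I ≤ J) : tightClosure p I ⊆ tightClosure p J := by
  rintro z ⟨c, hc, N, hN⟩
  exact ⟨c, hc, N, fun e he => bracket_mono h _ (hN e he)⟩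

lemma le_tc (p : ℕ) (I : Ideal A) : (I : Set A) ⊆ tightClosure p I := by
  intro z hz
  refine ⟨1, fun P hP h1 => ?_, 0, fun e _ => ?_⟩
  · exact (Ideal.minimalPrimes_isPrime hP).ne_top ((Ideal.eq_top_iff_one _).mpr h1)
  · rw [one_mul]; exact Ideal.subset_span ⟨z, hz, rfl⟩

lemma CI_congr {d : ℕ} {x y : Fin d → A} {i : Fin d} (h : ∀ j, j ≠ i → y j = x j)
    {a b : Fin d → ℕ} (hab : ∀ j, j ≠ i → a j = b j) : CI y i a = CI x i b := by
  unfold CI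
  congr 1
  refine Set.image_congr fun j hj => ?_
  rw [h j hj, hab j hj]

lemma pw_split {d : ℕ} (x : Fin d → A) (i : Fin d) (q : ℕ) :
    pw x q = CI x i (fun _ => q) ⊔ Ideal.span {x i ^ q} := by
  rw [pw, CI, ← Ideal.span_union]
  congr 1
  ext z
  constructor
  · rintro ⟨j, rfl⟩
    by_cases h : j = i
    · right; subst h; rfl
    · left; exact ⟨j, h, rfl⟩
  · rintro (⟨j, _, rfl⟩ | h)
    · exact ⟨j, rfl⟩
    · exact ⟨i, h.symm⟩

lemma span_split {d : ℕ} (x : Fin d → A) (i : Fin d) :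
    Ideal.span (Set.range x) = CI x i (fun _ => 1) ⊔ Ideal.span {x i} := by
  have := pw_split x i 1
  simpa only [pw, pow_one] using this

lemma CI_split {d : ℕ} (x : Fin d → A) {i l : Fin d} (hil : i ≠ l) (a : Fin d → ℕ) :
    CI x l a = Ideal.span ((fun j => x j ^ a j) '' {j | j ≠ i ∧ j ≠ l}) ⊔
      Ideal.span {x i ^ a i} := by
  rw [CI, ← Ideal.span_union]
  congr 1
  ext z
  constructor
  · rintro ⟨j, hj, rfl⟩
    by_cases h : j = i
    · right; subst h; rfl
    · left; exact ⟨j, ⟨h, hj⟩, rfl⟩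
  · rintro (⟨j, ⟨_, hj⟩, rfl⟩ | h)
    · exact ⟨j, hj, rfl⟩
    · exact ⟨i, hil, h.symm⟩

lemma Reg.pow {d : ℕ} {x : Fin d → A} (hx : Reg x) (i : Fin d) (a : Fin d → ℕ) (n : ℕ) (z : A)
    (h : x i ^ n * z ∈ CI x i a) : z ∈ CI x i a := by
  induction n with
  | zero => simpa using h
  | succ n ih =>
    rw [pow_succ', mul_assoc] at h
    exact ih (hx i a _ h)

variable [IsLocalRing A] [IsNoetherianRing A]

lemma krull_mem (D : Ideal A) (z : A) (h : ∀ n : ℕ, z ∈ D ⊔ maximalIdeal A ^ n) : z ∈ D := by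
  have hH : IsHausdorff (maximalIdeal A) (A ⧸ D) := inferInstance
  rw [← Ideal.Quotient.eq_zero_iff_mem]
  refine hH.haus _ fun n => ?_
  rw [SModEq.zero]
  obtain ⟨u, hu, v, hv, e⟩ := Submodule.mem_sup.mp (h n)
  rw [← e, map_add, Ideal.Quotient.eq_zero_iff_mem.mpr hu, zero_add]
  have : Ideal.Quotient.mk D v = v • (1 : A ⧸ D) := by
    change _ = Ideal.Quotient.mk D (v • 1)
    rw [smul_eq_mul, mul_one]
  rw [this]
  exact Submodule.smul_mem_smul hv trivial

/-- system of parameters -/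
def Sop {d : ℕ} (x : Fin d → A) : Prop := (Ideal.span (Set.range x)).radical = maximalIdeal A

lemma Sop.mem {d : ℕ} {x : Fin d → A} (h : Sop x) (i : Fin d) : x i ∈ maximalIdeal A := by
  rw [← h]; exact Ideal.le_radical (Ideal.subset_span ⟨i, rfl⟩)

lemma Sop.pow_mem {d : ℕ} {y : Fin d → A} (h : Sop y) (i : Fin d) (a : Fin d → ℕ) (w : A)
    (hw : w ∈ maximalIdeal A) : ∃ n, w ^ n ∈ CI y i a ⊔ Ideal.span {y i} := by
  have h1 : maximalIdeal A ≤ (CI y i a ⊔ Ideal.span {y i}).radical := by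
    rw [← h]
    refine Ideal.radical_le_radical_iff.mpr (Ideal.span_le.mpr ?_)
    rintro _ ⟨j, rfl⟩
    by_cases hj : j = i
    · subst hj
      exact Ideal.le_radical (Ideal.mem_sup_right (Ideal.subset_span rfl))
    · exact ⟨a j, Ideal.mem_sup_left (Ideal.subset_span ⟨j, hj, rfl⟩)⟩
  exact h1 hw

lemma reg_case1 {d : ℕ} {x y : Fin d → A} (hx : Sop x) (hy : Sop y) (i : Fin d)
    (hxy : ∀ j, j ≠ i → y j = x j) (h : Reg x) (a : Fin d → ℕ) (z : A)
    (hz : y i * z ∈ CI x i a) : z ∈ CI x i a := by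
  obtain ⟨n, hn⟩ := hy.pow_mem i a (x i) (hx.mem i)
  rw [CI_congr hxy (fun _ _ => rfl)] at hn
  obtain ⟨c, hc, u, hu, e⟩ := Submodule.mem_sup.mp hn
  obtain ⟨v, rfl⟩ := Ideal.mem_span_singleton'.mp hu
  apply h.pow i a n
  rw [← e, add_mul, mul_assoc]
  exact Ideal.add_mem _ (Ideal.mul_mem_right _ _ hc) (Ideal.mul_mem_left _ _ hz)

lemma reg_update {d : ℕ} {x y : Fin d → A} (hx : Sop x) (hy : Sop y) (i : Fin d)
    (hxy : ∀ j, j ≠ i → y j = x j) (h : Reg x) : Reg y := by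
  intro l a z hz
  change y l * z ∈ CI y l a at hz
  change z ∈ CI y l a
  by_cases hl : l = i
  · subst hl
    rw [CI_congr hxy (fun _ _ => rfl)] at hz ⊢
    exact reg_case1 hx hy l hxy h a z hz
  · set D := Ideal.span ((fun j => x j ^ a j) '' {j | j ≠ i ∧ j ≠ l}) with hD
    have hDy : Ideal.span ((fun j => y j ^ a j) '' {j | j ≠ i ∧ j ≠ l}) = D := by
      rw [hD]
      congr 1
      exact Set.image_congr fun j hj => by rw [hxy j hj.1]
    have hil : i ≠ l := fun h => hl h.symm
    rw [CI_split y hil, hDy] at hz ⊢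
    rw [hxy l hl] at hz
    obtain ⟨δ, hδ, u, hu, e⟩ := Submodule.mem_sup.mp hz
    obtain ⟨w, rfl⟩ := Ideal.mem_span_singleton'.mp hu
    have hE : CI x i (Function.update a l 1) = D ⊔ Ideal.span {x l} := by
      rw [CI_split x hl (Function.update a l 1), Function.update_self, pow_one]
      congr 2
      have : {j | j ≠ l ∧ j ≠ i} = {j : Fin d | j ≠ i ∧ j ≠ l} := by ext; simp [and_comm]
      rw [this]
      exact Set.image_congr fun j hj => by rw [Function.update_of_ne hj.2]
    have hw : w ∈ CI x i (Function.update a l 1) := by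
      have : ∀ n : ℕ, y i ^ n * w ∈ CI x i (Function.update a l 1) →
          w ∈ CI x i (Function.update a l 1) := by
        intro n
        induction n with
        | zero => intro h; simpa using h
        | succ n ih =>
          intro h2
          rw [pow_succ', mul_assoc] at h2
          exact ih (reg_case1 hx hy i hxy h _ _ h2)
      apply this (a i)
      rw [hE, mul_comm, eq_sub_of_add_eq' e]
      refine Ideal.sub_mem _ (Ideal.mem_sup_right ?_) (Ideal.mem_sup_left hδ)
      exact Ideal.mul_mem_right _ _ (Ideal.subset_span rfl)
    rw [hE] at hw
    obtain ⟨δ', hδ', v, hv, e2⟩ := Submodule.mem_sup.mp hw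
    obtain ⟨w', rfl⟩ := Ideal.mem_span_singleton'.mp hv
    have h3 : x l * (z - y i ^ a i * w') ∈ D := by
      have : x l * (z - y i ^ a i * w') = δ + y i ^ a i * δ' := by
        rw [mul_sub, ← e, ← e2]; ring
      rw [this]
      exact Ideal.add_mem _ hδ (Ideal.mul_mem_left _ _ hδ')
    have h4 : z - y i ^ a i * w' ∈ D := by
      apply krull_mem
      intro n
      have h5 : CI x l (Function.update a i n) = D ⊔ Ideal.span {x i ^ n} := by
        rw [CI_split x hil (Function.update a i n), Function.update_self]
        congr 2
        exact Set.image_congr fun j hj => by rw [Function.update_of_ne hj.1]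
      have h6 := h l (Function.update a i n) (z - y i ^ a i * w') (by
        change _ ∈ CI x l (Function.update a i n)
        rw [h5]; exact Ideal.mem_sup_left h3)
      change _ ∈ CI x l (Function.update a i n) at h6
      rw [h5] at h6
      refine SetLike.le_def.mp (sup_le_sup_left ?_ _) h6
      rw [Ideal.span_singleton_le_iff_mem]
      exact Ideal.pow_mem_pow (hx.mem i) n
    have : z = (z - y i ^ a i * w') + w' * y i ^ a i := by ring
    rw [this]
    exact Ideal.add_mem _ (Ideal.mem_sup_left h4)
      (Ideal.mem_sup_right (Ideal.mul_mem_left _ _ (Ideal.subset_span rfl)))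

/-- tight closedness of the ideal generated by `x` -/
def TC (p : ℕ) {d : ℕ} (x : Fin d → A) : Prop :=
  tightClosure p (Ideal.span (Set.range x)) ⊆ (Ideal.span (Set.range x) : Set A)

lemma frob_CI (p : ℕ) [Fact p.Prime] [CharP A p] {d : ℕ} (x : Fin d → A) (i : Fin d) (z : A)
    (hz : z ∈ CI x i (fun _ => 1)) (e : ℕ) : z ^ p ^ e ∈ CI x i (fun _ => p ^ e) := by
  have := frob_span p _ z hz e
  rw [← Set.image_comp] at this
  simpa only [Function.comp_def, pow_one] using this

lemma tc_pow (p : ℕ) [Fact p.Prime] [CharP A p] {d : ℕ} {x : Fin d → A} (h : Reg x)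
    (ht : TC p x) (i : Fin d) (n : ℕ) : ∀ z : A, (∃ c ∈ ringCirc A, ∃ N : ℕ, ∀ e, N ≤ e →
      c * z ^ p ^ e ∈ CI x i (fun _ => p ^ e) ⊔ Ideal.span {x i ^ ((n + 1) * p ^ e)}) →
      z ∈ CI x i (fun _ => 1) ⊔ Ideal.span {x i ^ (n + 1)} := by
  have h1 : ∀ z : A, (∃ c ∈ ringCirc A, ∃ N : ℕ, ∀ e, N ≤ e →
      c * z ^ p ^ e ∈ CI x i (fun _ => p ^ e) ⊔ Ideal.span {x i ^ (p ^ e)}) →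
      z ∈ CI x i (fun _ => 1) ⊔ Ideal.span {x i} := by
    rintro z ⟨c, hc, N, hN⟩
    have := @ht z ⟨c, hc, N, fun e he => by
      rw [bracket_eq, pw_split x i]; exact hN e he⟩
    rw [span_split x i] at this
    exact this
  induction n with
  | zero => simpa using h1
  | succ n ih =>
    rintro z ⟨c, hc, N, hN⟩
    have hz1 : z ∈ CI x i (fun _ => 1) ⊔ Ideal.span {x i} := by
      refine h1 z ⟨c, hc, N, fun e he => ?_⟩
      refine SetLike.le_def.mp (sup_le_sup_left ?_ _) (hN e he)
      rw [Ideal.span_singleton_le_span_singleton]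
      exact pow_dvd_pow _ (Nat.le_mul_of_pos_left _ (by omega))
    obtain ⟨γ, hγ, u, hu, rfl⟩ := Submodule.mem_sup.mp hz1
    obtain ⟨s, rfl⟩ := Ideal.mem_span_singleton'.mp hu
    have hs : s ∈ CI x i (fun _ => 1) ⊔ Ideal.span {x i ^ (n + 1)} := by
      refine ih s ⟨c, hc, N, fun e he => ?_⟩
      have h2 := hN e he
      obtain ⟨g, hg, w, hw, e1⟩ := Submodule.mem_sup.mp h2
      obtain ⟨v, rfl⟩ := Ideal.mem_span_singleton'.mp hw
      have h3 : c * s ^ p ^ e - v * x i ^ ((n + 1) * p ^ e) ∈ CI x i (fun _ => p ^ e) := by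
        apply h.pow i _ (p ^ e)
        rw [add_pow_char_pow, mul_pow] at e1
        have : x i ^ p ^ e * (c * s ^ p ^ e - v * x i ^ ((n + 1) * p ^ e)) =
            g - c * γ ^ p ^ e := by
          have e3 : x i ^ ((n + 1 + 1) * p ^ e) = x i ^ p ^ e * x i ^ ((n + 1) * p ^ e) := by
            rw [← pow_add]; congr 1; ring
          rw [e3] at e1
          linear_combination -e1
        rw [this]
        exact Ideal.sub_mem _ hg (Ideal.mul_mem_left _ _ (frob_CI p x i γ hγ e))
      have : c * s ^ p ^ e = (c * s ^ p ^ e - v * x i ^ ((n + 1) * p ^ e)) +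
        v * x i ^ ((n + 1) * p ^ e) := by ring
      rw [this]
      exact Ideal.add_mem _ (Ideal.mem_sup_left h3)
        (Ideal.mem_sup_right (Ideal.mul_mem_left _ _ (Ideal.subset_span rfl)))
    refine Ideal.add_mem _ (Ideal.mem_sup_left hγ) ?_
    obtain ⟨γ', hγ', u', hu', rfl⟩ := Submodule.mem_sup.mp hs
    obtain ⟨s', rfl⟩ := Ideal.mem_span_singleton'.mp hu'
    rw [add_mul]
    refine Ideal.add_mem _ (Ideal.mem_sup_left (Ideal.mul_mem_right _ _ hγ'))
      (Ideal.mem_sup_right ?_)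
    rw [mul_assoc, ← pow_succ]
    exact Ideal.mul_mem_left _ _ (Ideal.subset_span rfl)

lemma tc_update (p : ℕ) [Fact p.Prime] [CharP A p] {d : ℕ} {x y : Fin d → A} (hx : Sop x)
    (hy : Sop y) (i : Fin d)
    (hxy : ∀ j, j ≠ i → y j = x j) (h : Reg x) (ht : TC p x) : TC p y := by
  rintro z ⟨c, hc, N, hN⟩
  obtain ⟨n, hn⟩ := hy.pow_mem i (fun _ => 1) (x i) (hx.mem i)
  rw [CI_congr hxy (fun _ _ => rfl)] at hn
  have hn : x i ^ (n + 1) ∈ CI x i (fun _ => 1) ⊔ Ideal.span {y i} := by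
    rw [pow_succ]; exact Ideal.mul_mem_right _ _ hn
  obtain ⟨γ, hγ, u', hu', e0⟩ := Submodule.mem_sup.mp hn
  obtain ⟨u, rfl⟩ := Ideal.mem_span_singleton'.mp hu'
  have huz : u * z ∈ CI x i (fun _ => 1) ⊔ Ideal.span {x i ^ (n + 1)} := by
    refine tc_pow p h ht i n _ ⟨c, hc, N, fun e he => ?_⟩
    have h2 := hN e he
    rw [bracket_eq, pw_split y i, CI_congr hxy (fun _ _ => rfl)] at h2
    obtain ⟨g, hg, w, hw, e1⟩ := Submodule.mem_sup.mp h2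
    obtain ⟨v, rfl⟩ := Ideal.mem_span_singleton'.mp hw
    have e2 : (u * y i) ^ p ^ e = x i ^ ((n + 1) * p ^ e) - γ ^ p ^ e := by
      rw [pow_mul, ← e0, add_pow_char_pow]; ring
    have : c * (u * z) ^ p ^ e = (u ^ p ^ e * g - v * γ ^ p ^ e) +
        v * x i ^ ((n + 1) * p ^ e) := by
      rw [mul_pow] at e2 ⊢
      linear_combination (-u ^ p ^ e) * e1 + v * e2
    rw [this]
    refine Ideal.add_mem _ (Ideal.mem_sup_left (Ideal.sub_mem _ (Ideal.mul_mem_left _ _ hg)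
      (Ideal.mul_mem_left _ _ (frob_CI p x i γ hγ e))))
        (Ideal.mem_sup_right (Ideal.mul_mem_left _ _ (Ideal.subset_span rfl)))
  obtain ⟨γ', hγ', w, hw, e1⟩ := Submodule.mem_sup.mp huz
  obtain ⟨v, rfl⟩ := Ideal.mem_span_singleton'.mp hw
  have h5 : z - v * y i ∈ CI x i (fun _ => 1) := by
    apply h.pow i _ (n + 1)
    have : x i ^ (n + 1) * (z - v * y i) = γ * (z - v * y i) + y i * (γ' + v * γ) := by
      rw [← e0] at e1 ⊢
      linear_combination (-y i) * e1
    rw [this]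
    exact Ideal.add_mem _ (Ideal.mul_mem_right _ _ hγ) (Ideal.mul_mem_left _ _
      (Ideal.add_mem _ hγ' (Ideal.mul_mem_left _ _ hγ)))
  rw [span_split y i, CI_congr hxy (fun _ _ => rfl)]
  have : z = (z - v * y i) + v * y i := by ring
  rw [this]
  exact Ideal.add_mem _ (Ideal.mem_sup_left h5)
    (Ideal.mem_sup_right (Ideal.mul_mem_left _ _ (Ideal.subset_span rfl)))

end
end GN

open IsLocalRing Filter Topology

namespace GN

section
variable {A : Type*} [CommRing A] [IsLocalRing A] [IsNoetherianRing A]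

lemma avoid (S : Set (Ideal A)) (hS : S.Finite) (hp : ∀ Q ∈ S, Q.IsPrime ∧ Q ≠ maximalIdeal A) :
    ∃ w ∈ maximalIdeal A, ∀ Q ∈ S, w ∉ Q := by
  by_contra hcon
  push Not at hcon
  have h1 : ((maximalIdeal A : Ideal A) : Set A) ⊆ ⋃ i ∈ (↑hS.toFinset : Set (Ideal A)), (i : Set A) := by
    intro w hw
    obtain ⟨Q, hQ, hwQ⟩ := hcon w hw
    simp only [Set.mem_iUnion]
    exact ⟨Q, by simpa using hQ, hwQ⟩
  obtain ⟨Q, hQ, hle⟩ := (Ideal.subset_union_prime (f := fun i : Ideal A => i) ⊥ ⊥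
    (fun i hi _ _ => (hp i (by simpa using hi)).1)).mp h1
  obtain ⟨hQp, hne⟩ := hp Q (by simpa using hQ)
  exact hne (le_antisymm (le_maximalIdeal hQp.ne_top) hle)

lemma rad_of_primes (I : Ideal A) (hI : I ≤ maximalIdeal A)
    (h : ∀ Q : Ideal A, Q.IsPrime → I ≤ Q → Q = maximalIdeal A) : I.radical = maximalIdeal A := by
  refine le_antisymm ((Ideal.IsMaximal.isPrime' _).radical_le_iff.mpr hI) ?_
  rw [Ideal.radical_eq_sInf]
  refine le_sInf fun Q hQ => (h Q hQ.2 hQ.1).ge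

lemma prime_eq_of_rad {I Q : Ideal A} (h : I.radical = maximalIdeal A) (hQ : Q.IsPrime)
    (hle : I ≤ Q) : Q = maximalIdeal A := by
  refine le_antisymm (le_maximalIdeal hQ.ne_top) ?_
  rw [← h]
  exact hQ.radical_le_iff.mpr hle

lemma min_ne (d : ℕ) (hd : ringKrullDim A = d) {s : Set A} {n : ℕ} (hs : s.Finite)
    (hn : s.ncard ≤ n) (hnd : n < d) {Q : Ideal A} (hQ : Q ∈ (Ideal.span s).minimalPrimes) :
    Q ≠ maximalIdeal A := by
  rintro rfl
  have h1 := Ideal.height_le_card_of_mem_minimalPrimes_span hs hQ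
  have h2 := IsLocalRing.maximalIdeal_height_eq_ringKrullDim (R := A)
  rw [hd] at h2
  have h3 : (maximalIdeal A).height = d := by exact_mod_cast h2
  rw [h3] at h1
  have : d ≤ s.ncard := by exact_mod_cast h1
  omega

lemma Sop.min_ne {d : ℕ} (hd : ringKrullDim A = d) (x : Fin d → A) (i : Fin d) {Q : Ideal A}
    (hQ : Q ∈ (Ideal.span (x '' {j | j ≠ i})).minimalPrimes) : Q ≠ maximalIdeal A := by
  have h0 : ({j | j ≠ i} : Set (Fin d)).ncard = d - 1 := by
    have : ({j | j ≠ i} : Set (Fin d)) = {i}ᶜ := by ext; simp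
    rw [this, Set.ncard_compl]; simp
  refine GN.min_ne d hd (n := d - 1) (Set.toFinite _) ?_ ?_ hQ
  · rw [← h0]; exact Set.ncard_image_le (Set.toFinite _)
  · have := i.2; omega

lemma Sop.update {d : ℕ} {x : Fin d → A} (hx : Sop x) (i : Fin d) (w : A)
    (hw : w ∈ maximalIdeal A)
    (hav : ∀ Q ∈ (Ideal.span (x '' {j | j ≠ i})).minimalPrimes, w ∉ Q) :
    Sop (Function.update x i w) := by
  apply rad_of_primes
  · rw [Ideal.span_le]
    rintro _ ⟨j, rfl⟩
    by_cases hj : j = i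
    · subst hj; simpa using hw
    · rw [Function.update_of_ne hj]; exact hx.mem j
  · intro Q hQ hle
    by_contra hne
    have hwQ : w ∈ Q := hle (Ideal.subset_span ⟨i, by simp⟩)
    have hD : x '' {j | j ≠ i} ⊆ Q := by
      rintro _ ⟨j, hj, rfl⟩
      exact hle (Ideal.subset_span ⟨j, by simp [Function.update_of_ne hj]⟩)
    have hlt : Q < maximalIdeal A := lt_of_le_of_ne (le_maximalIdeal hQ.ne_top) hne
    refine hav Q ?_ hwQ
    have hins : insert (x i) (x '' {j | j ≠ i}) = Set.range x := by
      ext a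
      constructor
      · rintro (rfl | ⟨j, _, rfl⟩) <;> exact ⟨_, rfl⟩
      · rintro ⟨j, rfl⟩
        by_cases hj : j = i
        · subst hj; exact Or.inl rfl
        · exact Or.inr ⟨j, hj, rfl⟩
    refine Ideal.mem_minimalPrimes_span_of_mem_minimalPrimes_span_insert hlt (x i)
      (x '' {j | j ≠ i}) ?_ _ hD ?_
    · rw [hins]
      refine ⟨⟨Ideal.IsMaximal.isPrime' _, ?_⟩, ?_⟩
      · rw [Ideal.span_le]; rintro _ ⟨j, rfl⟩; exact hx.mem j
      · rintro P ⟨hP, hP2⟩ _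
        exact (prime_eq_of_rad hx hP hP2).ge
    · exact fun a ha => Ideal.le_radical (Ideal.subset_span (Or.inr ha))

lemma chain (p : ℕ) [Fact p.Prime] [CharP A p] {d : ℕ} (hd : ringKrullDim A = d) (m : ℕ) :
    ∀ x y : Fin d → A, Sop x → Sop y → (∀ j : Fin d, m ≤ j → y j = x j) →
      Reg x → TC p x → Reg y ∧ TC p y := by
  induction m with
  | zero =>
    intro x y _ _ hxy hr ht
    have : y = x := funext fun j => hxy j (Nat.zero_le _)
    subst this
    exact ⟨hr, ht⟩
  | succ m ih =>
    intro x y hx hy hxy hr ht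
    by_cases hm : m < d
    · set i : Fin d := ⟨m, hm⟩ with hi
      obtain ⟨w, hw, hav⟩ := avoid
        ((Ideal.span (x '' {j | j ≠ i})).minimalPrimes ∪
          (Ideal.span (y '' {j | j ≠ i})).minimalPrimes)
        (Set.Finite.union (Ideal.finite_minimalPrimes_of_isNoetherianRing A _)
          (Ideal.finite_minimalPrimes_of_isNoetherianRing A _))
        (by
          rintro Q (hQ | hQ)
          · exact ⟨hQ.1.1, Sop.min_ne hd x i hQ⟩
          · exact ⟨hQ.1.1, Sop.min_ne hd y i hQ⟩)
      have hx' := hx.update i w hw (fun Q hQ => hav Q (Or.inl hQ))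
      have hy' := hy.update i w hw (fun Q hQ => hav Q (Or.inr hQ))
      have hxx' : ∀ j, j ≠ i → Function.update x i w j = x j :=
        fun j hj => Function.update_of_ne hj _ _
      have hyy' : ∀ j, j ≠ i → y j = Function.update y i w j :=
        fun j hj => (Function.update_of_ne hj _ _).symm
      have hr' := reg_update hx hx' i hxx' hr
      have ht' := tc_update p hx hx' i hxx' hr ht
      obtain ⟨hr2, ht2⟩ := ih _ (Function.update y i w) hx' hy' (by
        intro j hj
        by_cases hji : j = i
        · subst hji; simp
        · rw [Function.update_of_ne hji, Function.update_of_ne hji]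
          refine hxy j ?_
          have : (j : ℕ) ≠ m := fun h => hji (Fin.ext h)
          omega) hr' ht'
      exact ⟨reg_update hy' hy i hyy' hr2, tc_update p hy' hy i hyy' hr2 ht2⟩
    · exact ih x y hx hy (fun j hj => absurd j.2 (by omega)) hr ht

lemma extend (d : ℕ) (hd : ringKrullDim A = d) (j : ℕ) : ∀ (n : ℕ), n + j = d →
    ∀ (y : Fin n → A), (∀ i, y i ∈ maximalIdeal A) →
    (∀ Q : Ideal A, Q.IsPrime → Ideal.span (Set.range y) ≤ Q → (n : ℕ∞) ≤ Q.height) →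
    ∃ z : Fin j → A, (Ideal.span (Set.range y ∪ Set.range z)).radical = maximalIdeal A := by
  have h2 : (maximalIdeal A).height = d := by
    have h2 := IsLocalRing.maximalIdeal_height_eq_ringKrullDim (R := A)
    rw [hd] at h2
    exact_mod_cast h2
  induction j with
  | zero =>
    intro n hn y hy hQ
    refine ⟨Fin.elim0, ?_⟩
    have he : Set.range (Fin.elim0 : Fin 0 → A) = ∅ := Set.range_eq_empty _
    rw [he, Set.union_empty]
    apply rad_of_primes
    · rw [Ideal.span_le]; rintro _ ⟨i, rfl⟩; exact hy i
    · intro Q hQp hle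
      have h3 := hQ Q hQp hle
      refine Ideal.eq_of_le_of_height_le _ (le_maximalIdeal hQp.ne_top) ?_
      rw [h2]
      have : n = d := by omega
      rwa [← this]
  | succ j ih =>
    intro n hn y hy hQ
    obtain ⟨w, hw, hav⟩ := avoid ((Ideal.span (Set.range y)).minimalPrimes)
      (Ideal.finite_minimalPrimes_of_isNoetherianRing A _)
      (fun Q hQ => ⟨hQ.1.1, min_ne d hd (n := n) (Set.finite_range y) (by
        rw [← Set.image_univ]
        refine (Set.ncard_image_le Set.finite_univ).trans ?_
        simp [Set.ncard_univ]) (by omega) hQ⟩)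
    have hr : Set.range (Fin.snoc y w : Fin (n + 1) → A) = insert w (Set.range y) := by
      ext a
      simp only [Set.mem_range, Fin.exists_fin_succ', Fin.snoc_castSucc, Fin.snoc_last,
        Set.mem_insert_iff]
      rw [or_comm, eq_comm]
    obtain ⟨z, hz⟩ := ih (n + 1) (by omega) (Fin.snoc y w : Fin (n + 1) → A) (by
        intro i
        refine Fin.lastCases ?_ (fun i => ?_) i
        · simpa using hw
        · simpa using hy i) (by
        intro Q hQp hle
        rw [hr, Ideal.span_le] at hle
        have hle2 : Ideal.span (Set.range y) ≤ Q :=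
          Ideal.span_le.mpr fun a ha => hle (Or.inr ha)
        obtain ⟨P, hP, hPQ⟩ := Ideal.exists_minimalPrimes_le hle2
        haveI := hP.1.1
        have hlt : P < Q := lt_of_le_of_ne hPQ (by
          rintro rfl
          exact hav _ hP (hle (Or.inl rfl)))
        have h3 := Ideal.height_add_one_le_of_lt_of_isPrime hlt
        refine le_trans ?_ h3
        push_cast
        exact add_le_add_left (hQ P hP.1.1 hP.1.2) 1)
    refine ⟨Fin.cons w z, ?_⟩
    rw [← hz, hr, Fin.range_cons]
    congr 2
    ext a; simp only [Set.mem_union, Set.mem_insert_iff]; tauto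

theorem frat (p : ℕ) [Fact p.Prime] [CharP A p] {d : ℕ} (hd : ringKrullDim A = d)
    (x : Fin d → A) (hx : Sop x) (hr : Reg x) (ht : TC p x) : FRationalLocal A p := by
  rintro I ⟨n, hn, y, rfl⟩
  refine Set.Subset.antisymm ?_ (le_tc p _)
  have hQ : ∀ Q : Ideal A, Q.IsPrime → Ideal.span (Set.range y) ≤ Q → (n : ℕ∞) ≤ Q.height := by
    intro Q hQp hle
    rw [← hn]
    refine (iInf₂_le (⟨Q, hQp⟩ : PrimeSpectrum A) hle).trans ?_
    rw [← PrimeSpectrum.height_eq_orderHeight]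
  have hne : Ideal.span (Set.range y) ≠ ⊤ := by
    intro h
    have : idealHeight (Ideal.span (Set.range y)) = ⊤ := by
      rw [h, idealHeight, iInf_eq_top]
      intro P
      rw [iInf_eq_top]
      intro hP
      exact absurd (top_le_iff.mp hP) P.2.ne_top
    rw [this] at hn
    exact absurd hn (ENat.top_ne_coe n)
  have hle := le_maximalIdeal hne
  have hnd : n ≤ d := by
    have h1 := hQ (maximalIdeal A) (Ideal.IsMaximal.isPrime' _) hle
    have h2 := IsLocalRing.maximalIdeal_height_eq_ringKrullDim (R := A)
    rw [hd] at h2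
    have h3 : (maximalIdeal A).height = d := by exact_mod_cast h2
    rw [h3] at h1
    exact_mod_cast h1
  obtain ⟨j, rfl⟩ := Nat.exists_eq_add_of_le hnd
  obtain ⟨z, hz⟩ := extend (n + j) hd j n rfl y
    (fun i => hle (Ideal.subset_span ⟨i, rfl⟩)) hQ
  have hzm : ∀ i, z i ∈ maximalIdeal A := fun i => by
    rw [← hz]; exact Ideal.le_radical (Ideal.subset_span (Or.inr ⟨i, rfl⟩))
  intro u hu
  apply krull_mem
  intro t
  have hrange : ∀ t : ℕ, Set.range (Fin.append y (fun i => z i ^ t)) =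
      Set.range y ∪ Set.range (fun i => z i ^ t) := by
    intro t
    ext a
    constructor
    · rintro ⟨i, rfl⟩
      refine Fin.addCases (fun i => ?_) (fun i => ?_) i
      · left; exact ⟨i, by simp⟩
      · right; exact ⟨i, by simp⟩
    · rintro (⟨i, rfl⟩ | ⟨i, rfl⟩)
      · exact ⟨Fin.castAdd j i, by simp⟩
      · exact ⟨Fin.natAdd n i, by simp⟩
  have hsop : Sop (Fin.append y (fun i => z i ^ (t + 1))) := by
    apply rad_of_primes
    · rw [hrange, Ideal.span_le]
      rintro _ (⟨i, rfl⟩ | ⟨i, rfl⟩)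
      · exact hle (Ideal.subset_span ⟨i, rfl⟩)
      · exact Ideal.pow_mem_of_mem _ (hzm i) _ (by omega)
    · intro Q hQp hle2
      rw [hrange, Ideal.span_le] at hle2
      refine prime_eq_of_rad hz hQp (Ideal.span_le.mpr ?_)
      rintro _ (⟨i, rfl⟩ | ⟨i, rfl⟩)
      · exact hle2 (Or.inl ⟨i, rfl⟩)
      · exact hQp.mem_of_pow_mem _ (hle2 (Or.inr ⟨i, rfl⟩))
  have htc := (chain p hd (n + j) x _ hx hsop (fun i hi => absurd i.2 (by omega)) hr ht).2
  have h4 := htc (tc_mono p (Ideal.span_mono (by rw [hrange]; exact Set.subset_union_left)) hu)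
  refine (Ideal.span_le.mpr ?_ : Ideal.span (Set.range (Fin.append y (fun i => z i ^ (t + 1)))) ≤ _) h4
  rw [hrange]
  rintro _ (⟨i, rfl⟩ | ⟨i, rfl⟩)
  · exact Ideal.mem_sup_left (Ideal.subset_span ⟨i, rfl⟩)
  · exact Ideal.mem_sup_right (Ideal.pow_le_pow_right (Nat.le_succ t)
      (Ideal.pow_mem_pow (hzm i) _))

end

end GN

/-- **Goto–Nakamura.** Let `J` be an `𝔪`-primary parameter ideal (generated by `d`
elements) of a `d`-dimensional complete equidimensional reduced Noetherian local ring of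
characteristic `p`. Then `ℓ_A(A/J^*) ≤ e(J)`; moreover, if `ℓ_A(A/J^*) = e(J)`, then `A`
is F-rational. -/
theorem goto_nakamura (A : Type*) [CommRing A] [IsLocalRing A]
    [IsNoetherianRing A] [IsReduced A] (p : ℕ) [Fact p.Prime] [CharP A p]
    (hcomp : IsAdicComplete (IsLocalRing.maximalIdeal A) A)
    (d : ℕ) (hd : ringKrullDim A = d)
    (hequi : ∀ P ∈ minimalPrimes A, ringKrullDim (A ⧸ P) = d)
    (J : Ideal A) (hJrad : J.radical = IsLocalRing.maximalIdeal A)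
    (x : Fin d → A) (hJ : J = Ideal.span (Set.range x))
    (eJ : ℝ)
    (heJ : Filter.Tendsto
      (fun n : ℕ =>
        (d.factorial : ℝ) * ((moduleLength A (A ⧸ J ^ n)).toNat : ℝ) / (n : ℝ) ^ d)
      Filter.atTop (nhds eJ)) :
    (∃ l : ℕ, moduleLength A (A ⧸ Ideal.span (tightClosure p J)) = l ∧ (l : ℝ) ≤ eJ) ∧
      ((∃ l : ℕ, moduleLength A (A ⧸ Ideal.span (tightClosure p J)) = l ∧ (l : ℝ) = eJ) →
        FRationalLocal A p) := by
  subst hJ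
  simp only [moduleLength, ← Module.length_eq_height] at heJ ⊢
  have h := GN.coreA A p hcomp d hequi x hJrad eJ heJ
  refine ⟨h.1, fun hl => ?_⟩
  obtain ⟨hr, ht⟩ := h.2 hl
  exact GN.frat p hd x hJrad hr ht
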